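/- arXiv:2506.03215 — 3 statements merged into one kernel-verified Lean document; each statement's English description precedes it below -/
import Mathlib

section
/- Let S be a subset of M containing infinitely many ideals with |S(x^{1/2})| = o(|S(x)|) as x → ∞. Then the following two assertions are equivalent: (i) for every γ ∈ ℝ, lim_{x → ∞} (1/|S(x)|) · |{m ∈ S(x) : N(m) ≥ 3, (ω(m) − log log N(m)) / √(log log N(m)) ≤ γ}| = Φ(γ); (ii) for every γ ∈ ℝ, lim_{x → ∞} (1/|S(x)|) · |{m ∈ S(x) : (ω(m) − log log x) / √(log log x) ≤ γ}| = Φ(γ). -/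
open Filter MeasureTheory Topology
open scoped BigOperators

noncomputable section

variable (K : Type) [Field K] [NumberField K]

/-- The standard Gaussian distribution function Φ. -/
def gaussPhi (γ : ℝ) : ℝ :=
  (Real.sqrt (2 * Real.pi))⁻¹ * ∫ u in Set.Iic γ, Real.exp (-u ^ 2 / 2)

/-- Number of distinct prime ideal divisors of an ideal. -/
def omegaI (m : Ideal (NumberField.RingOfIntegers K)) : ℕ :=
  Nat.card {p : Ideal (NumberField.RingOfIntegers K) // p.IsPrime ∧ p ∣ m}

/-- The number of elements of `S` with norm at most `x`. -/
def countS (S : Set (Ideal (NumberField.RingOfIntegers K))) (x : ℝ) : ℕ :=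
  Nat.card {m : Ideal (NumberField.RingOfIntegers K) //
    m ∈ S ∧ (Ideal.absNorm m : ℝ) ≤ x}

/-!
If `√x < N m ≤ x`, then `log log N m` and `log log x` differ by at most `log 2`, whereas the scale
`√(log log x)` tends to infinity. So, for every `ε > 0` and all large `x`, if one normalization of
`ω m` is at most `γ`, then the other is at most `γ + ε`, for every `m ∈ S(x)` outside `S(√x)`.
These exceptions have proportion `o(1)`, so each of the two distribution functions is eventually
bounded by an `ε`-shift of the other plus `o(1)`. Pointwise convergence to a continuous limit
therefore passes from either one to the other.
-/

lemma continuous_setIntegral_Iic {f : ℝ → ℝ} (hf : Integrable f) :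
    Continuous fun γ => ∫ u in Set.Iic γ, f u := by
  refine continuous_iff_continuousAt.2 fun γ => ?_
  exact (hf.integrableOn (s := Set.Iic (γ + 1))).continuousOn_Iic_primitive_Iic.continuousAt
    (Iic_mem_nhds (lt_add_one γ))

lemma continuous_gaussPhi : Continuous gaussPhi := by
  refine continuous_const.mul (continuous_setIntegral_Iic ?_)
  simpa only [neg_div, div_eq_inv_mul, neg_mul, one_mul, mul_one, mul_neg] using
    integrable_exp_neg_mul_sq (b := 2⁻¹) (by norm_num)

lemma tendsto_of_eventually_le_shift_add {ι : Type*} {l : Filter ι} {F G : ℝ → ι → ℝ}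
    {P : ℝ → ℝ} {e : ι → ℝ} (hP : Continuous P) (he : Tendsto e l (𝓝 0))
    (hFG : ∀ γ, ∀ ε > 0, ∀ᶠ i in l, F γ i ≤ G (γ + ε) i + e i)
    (hGF : ∀ γ, ∀ ε > 0, ∀ᶠ i in l, G γ i ≤ F (γ + ε) i + e i)
    (hF : ∀ γ, Tendsto (F γ) l (𝓝 (P γ))) (γ : ℝ) :
    Tendsto (G γ) l (𝓝 (P γ)) := by
  have hshift : Tendsto (fun ε => P (γ + ε)) (𝓝[>] 0) (𝓝 (P γ)) :=
    (Continuous.tendsto' (by fun_prop) _ _ (by rw [add_zero])).mono_left nhdsWithin_le_nhds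
  have hshift_neg : Tendsto (fun ε => P (γ - ε)) (𝓝[>] 0) (𝓝 (P γ)) :=
    (Continuous.tendsto' (by fun_prop) _ _ (by rw [sub_zero])).mono_left nhdsWithin_le_nhds
  refine tendsto_order.2 ⟨fun a ha => ?_, fun b hb => ?_⟩
  · obtain ⟨ε, haε, hε⟩ := ((hshift_neg.eventually_const_lt ha).and self_mem_nhdsWithin).exists
    have hlim : Tendsto (fun i => F (γ - ε) i - e i) l (𝓝 (P (γ - ε))) := by
      simpa only [sub_zero] using (hF (γ - ε)).sub he
    filter_upwards [hlim.eventually_const_lt haε, hFG (γ - ε) ε hε] with i hai hle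
    rw [sub_add_cancel] at hle
    linarith
  · obtain ⟨ε, hεb, hε⟩ := ((hshift.eventually_lt_const hb).and self_mem_nhdsWithin).exists
    have hlim : Tendsto (fun i => F (γ + ε) i + e i) l (𝓝 (P (γ + ε))) := by
      simpa only [add_zero] using (hF (γ + ε)).add he
    filter_upwards [hlim.eventually_lt_const hεb, hGF γ ε hε] with i hib hle
    exact hle.trans_lt hib

lemma abs_sqrt_sub_sqrt_le {a b : ℝ} (ha : 1 ≤ a) (hb : 0 ≤ b) :
    |√a - √b| ≤ |a - b| := by
  have hfactor : a - b = (√a - √b) * (√a + √b) := by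
    rw [mul_comm, ← sq_sub_sq, Real.sq_sqrt (by linarith), Real.sq_sqrt hb]
  have hsum : 1 ≤ |√a + √b| := by
    refine le_trans ?_ (le_abs_self _)
    linarith [Real.one_le_sqrt.2 ha, Real.sqrt_nonneg b]
  rw [hfactor, abs_mul]
  exact le_mul_of_one_le_right (abs_nonneg _) hsum

lemma sub_div_sqrt_le_add {w a b γ ε C : ℝ} (ha : 1 ≤ a) (hb : 1 ≤ b) (hab : |a - b| ≤ C)
    (hε : C * (1 + |γ|) ≤ ε * √b) (h : (w - a) / √a ≤ γ) :
    (w - b) / √b ≤ γ + ε := by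
  rw [div_le_iff₀ (Real.sqrt_pos.2 (by linarith))] at h ⊢
  have hscale : γ * (√a - √b) ≤ |γ| * C :=
    calc γ * (√a - √b) ≤ |γ| * |√a - √b| := by rw [← abs_mul]; exact le_abs_self _
      _ ≤ |γ| * C := by gcongr; exact (abs_sqrt_sub_sqrt_le ha (by linarith)).trans hab
  linarith [le_of_abs_le hab]

lemma tendsto_log_log_atTop : Tendsto (fun x => Real.log (Real.log x)) atTop atTop :=
  Real.tendsto_log_atTop.comp Real.tendsto_log_atTop

lemma eventually_abs_log_log_sub_le {δ : ℝ} (hδ : 0 < δ) :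
    ∀ᶠ x : ℝ in atTop, ∀ t ∈ Set.Ioc (x ^ δ) x,
      |Real.log (Real.log t) - Real.log (Real.log x)| ≤ |Real.log δ| := by
  filter_upwards [eventually_gt_atTop 1] with x hx t ⟨hδt, htx⟩
  have hlogx : 0 < Real.log x := Real.log_pos hx
  have hδx : 0 < x ^ δ := by positivity
  have hlower : δ * Real.log x ≤ Real.log t := by
    rw [← Real.log_rpow (by linarith)]
    exact Real.log_le_log hδx hδt.le
  have hlog_lower : Real.log δ + Real.log (Real.log x) ≤ Real.log (Real.log t) := by
    rw [← Real.log_mul hδ.ne' hlogx.ne']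
    exact Real.log_le_log (by positivity) hlower
  have hlog_upper : Real.log (Real.log t) ≤ Real.log (Real.log x) :=
    Real.log_le_log (lt_of_lt_of_le (by positivity) hlower)
      (Real.log_le_log (hδx.trans hδt) htx)
  rw [abs_sub_comm, abs_of_nonneg (sub_nonneg.2 hlog_upper)]
  linarith [neg_le_abs (Real.log δ)]

section CountUpTo

variable {α : Type*} (N : α → ℝ) (S : Set α)

/-- The counting function `|S(x)|` of a set `S` whose elements are measured by the size function
`N`. As the value of `Nat.card`, it is `0` when there are infinitely many elements to count. -/
def countUpTo (x : ℝ) : ℕ :=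
  Nat.card {m : α // m ∈ S ∧ N m ≤ x}

/-- The proportion of the elements of `S(x)` that satisfy `p`, with the value `0` when `S(x)` is
empty. -/
def proportionUpTo (p : α → Prop) (x : ℝ) : ℝ :=
  (Nat.card {m : α // m ∈ S ∧ N m ≤ x ∧ p m} : ℝ) / countUpTo N S x

lemma proportionUpTo_le_add [Northcott N] {p q : α → Prop} {x y : ℝ}
    (h : ∀ m, N m ∈ Set.Ioc y x → p m → q m) :
    proportionUpTo N S p x ≤
      proportionUpTo N S q x + (countUpTo N S y : ℝ) / countUpTo N S x := by
  have hsub : {m | m ∈ S ∧ N m ≤ x ∧ p m} ⊆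
      {m | m ∈ S ∧ N m ≤ x ∧ q m} ∪ {m | m ∈ S ∧ N m ≤ y} := by
    rintro m ⟨hS, hx, hp⟩
    rcases le_or_gt (N m) y with hy | hy
    · exact Or.inr ⟨hS, hy⟩
    · exact Or.inl ⟨hS, hx, h m ⟨hy, hx⟩ hp⟩
  have hfin : ({m | m ∈ S ∧ N m ≤ x ∧ q m} ∪ {m | m ∈ S ∧ N m ≤ y}).Finite :=
    ((Northcott.finite_le x).subset fun m hm => hm.2.1).union
      ((Northcott.finite_le y).subset fun m hm => hm.2)
  have hcard : Nat.card {m // m ∈ S ∧ N m ≤ x ∧ p m} ≤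
      Nat.card {m // m ∈ S ∧ N m ≤ x ∧ q m} + countUpTo N S y :=
    (Set.ncard_le_ncard hsub hfin).trans (Set.ncard_union_le _ _)
  rw [proportionUpTo, proportionUpTo, ← add_div]
  gcongr
  exact_mod_cast hcard

end CountUpTo

lemma eventually_sub_div_sqrt_le_add {g y : ℝ → ℝ} {C : ℝ} (hg : Tendsto g atTop atTop)
    (hgy : ∀ᶠ x in atTop, ∀ t ∈ Set.Ioc (y x) x, |g t - g x| ≤ C) (γ : ℝ) {ε : ℝ} (hε : 0 < ε) :
    ∀ᶠ x in atTop, ∀ t ∈ Set.Ioc (y x) x, ∀ w : ℝ,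
      ((w - g t) / √(g t) ≤ γ → (w - g x) / √(g x) ≤ γ + ε) ∧
      ((w - g x) / √(g x) ≤ γ → (w - g t) / √(g t) ≤ γ + ε) := by
  have hlarge : ∀ᶠ s in atTop, 1 ≤ s ∧ C * (1 + |γ|) ≤ ε * √s :=
    (eventually_ge_atTop 1).and
      ((Real.tendsto_sqrt_atTop.const_mul_atTop hε).eventually_ge_atTop _)
  obtain ⟨s₀, hs₀⟩ := eventually_atTop.1 hlarge
  filter_upwards [hgy, hg.eventually_ge_atTop (s₀ + |C|)] with x hx hgx t ht w
  have hclose : |g t - g x| ≤ C := hx t ht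
  obtain ⟨hgt_one, hgt_scale⟩ := hs₀ (g t) (by linarith [neg_le_of_abs_le hclose, le_abs_self C])
  obtain ⟨hgx_one, hgx_scale⟩ := hs₀ (g x) (by linarith [abs_nonneg C])
  exact ⟨sub_div_sqrt_le_add hgt_one hgx_one hclose hgx_scale,
    sub_div_sqrt_le_add hgx_one hgt_one (by rwa [abs_sub_comm]) hgt_scale⟩

theorem gaussian_normNm_iff_gaussian_x_general {α : Type*} {N : α → ℝ} [Northcott N] {S : Set α}
    (w : α → ℝ) {Φ : ℝ → ℝ} (hΦ : Continuous Φ) {g y : ℝ → ℝ} {C : ℝ}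
    (hg : Tendsto g atTop atTop) (hy : Tendsto y atTop atTop)
    (hgy : ∀ᶠ x in atTop, ∀ t ∈ Set.Ioc (y x) x, |g t - g x| ≤ C)
    (hS : (fun x => (countUpTo N S (y x) : ℝ)) =o[atTop] fun x => (countUpTo N S x : ℝ)) (c : ℝ) :
    (∀ γ, Tendsto
      (fun x => proportionUpTo N S (fun m => c ≤ N m ∧ (w m - g (N m)) / √(g (N m)) ≤ γ) x)
      atTop (𝓝 (Φ γ))) ↔
    (∀ γ, Tendsto (fun x => proportionUpTo N S (fun m => (w m - g x) / √(g x) ≤ γ) x)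
      atTop (𝓝 (Φ γ))) := by
  have hexc := hS.tendsto_div_nhds_zero
  have hle : ∀ γ, ∀ ε > 0, ∀ᶠ x in atTop,
      proportionUpTo N S (fun m => c ≤ N m ∧ (w m - g (N m)) / √(g (N m)) ≤ γ) x ≤
        proportionUpTo N S (fun m => (w m - g x) / √(g x) ≤ γ + ε) x +
          (countUpTo N S (y x) : ℝ) / countUpTo N S x := fun γ ε hε => by
    filter_upwards [eventually_sub_div_sqrt_le_add hg hgy γ hε] with x hx
    exact proportionUpTo_le_add N S fun m hm hp => (hx _ hm _).1 hp.2
  have hge : ∀ γ, ∀ ε > 0, ∀ᶠ x in atTop,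
      proportionUpTo N S (fun m => (w m - g x) / √(g x) ≤ γ) x ≤
        proportionUpTo N S (fun m => c ≤ N m ∧ (w m - g (N m)) / √(g (N m)) ≤ γ + ε) x +
          (countUpTo N S (y x) : ℝ) / countUpTo N S x := fun γ ε hε => by
    filter_upwards [eventually_sub_div_sqrt_le_add hg hgy γ hε, hy.eventually_ge_atTop c]
      with x hx hcy
    exact proportionUpTo_le_add N S fun m hm hp => ⟨hcy.trans hm.1.le, (hx _ hm _).2 hp⟩
  exact ⟨tendsto_of_eventually_le_shift_add hΦ hexc hle hge,
    tendsto_of_eventually_le_shift_add hΦ hexc hge hle⟩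

instance northcott_absNorm_cast :
    Northcott fun m : Ideal (NumberField.RingOfIntegers K) => (Ideal.absNorm m : ℝ) where
  finite_le x := (Ideal.finite_setOfPred_absNorm_le ⌊x⌋₊).subset fun _ hm => Nat.le_floor hm

/-- For an infinite set `S` of nonzero ideals with `|S(√x)| = o(|S(x)|)`, the Gaussian
limit law for `(ω(m) - log log N(m))/√(log log N(m))` is equivalent to the Gaussian limit
law for `(ω(m) - log log x)/√(log log x)`. -/
theorem gaussian_normNm_iff_gaussian_x
    (S : Set (Ideal (NumberField.RingOfIntegers K)))
    (hS0 : 0 ∉ S) (hSinf : S.Infinite)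
    (hShalf : (fun x : ℝ => (countS K S (x ^ ((1 : ℝ)/2)) : ℝ)) =o[atTop]
      fun x : ℝ => (countS K S x : ℝ)) :
    (∀ γ : ℝ, Tendsto (fun x : ℝ =>
        (Nat.card {m : Ideal (NumberField.RingOfIntegers K) //
            m ∈ S ∧ (Ideal.absNorm m : ℝ) ≤ x ∧ 3 ≤ Ideal.absNorm m ∧
            ((omegaI K m : ℝ) - Real.log (Real.log (Ideal.absNorm m))) /
              Real.sqrt (Real.log (Real.log (Ideal.absNorm m))) ≤ γ} : ℝ) /
          (countS K S x : ℝ)) atTop (𝓝 (gaussPhi γ))) ↔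
    (∀ γ : ℝ, Tendsto (fun x : ℝ =>
        (Nat.card {m : Ideal (NumberField.RingOfIntegers K) //
            m ∈ S ∧ (Ideal.absNorm m : ℝ) ≤ x ∧
            ((omegaI K m : ℝ) - Real.log (Real.log x)) /
              Real.sqrt (Real.log (Real.log x)) ≤ γ} : ℝ) /
          (countS K S x : ℝ)) atTop (𝓝 (gaussPhi γ))) := by
  simpa only [proportionUpTo, countUpTo, countS, Nat.ofNat_le_cast] using
    gaussian_normNm_iff_gaussian_x_general (fun m => (omegaI K m : ℝ)) continuous_gaussPhi
      tendsto_log_log_atTop (tendsto_rpow_atTop one_half_pos)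
      (eventually_abs_log_log_sub_le one_half_pos) hShalf 3

end
end

section
/- Let K be a number field. There exists a constant A = A(K) such that for x ≥ 3, Σ_{p prime ideal of O_K, N(p) ≤ x} 1/N(p) = log log x + A + O(1/log x), where the implied constant depends only on K. -/
open Filter Topology
open scoped BigOperators

noncomputable section

/-!
Write `d` for the degree of `K`. A box of side `2n` in `𝓞 K ≅ ℤ^d`, centred at a rational integer
that is a large multiple of `n`, contains about `(2n)^d` elements, all of norm between `n^d` and
`(D n)^d`. A nonzero ideal `I` contains a nonzero element with coordinates `O(N(I)^{1/d})`, hence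
has covering radius `O(N(I)^{1/d})`, so the box meets `I` in `(2n+1)^d / N(I)` points up to a
relative error `O(N(I)^{1/d} / n)`. Factoring every `(α)` in the box into primes, in analogy with
the factorisation of `n!` over `ℚ`, gives

  `(2n+1)^d · d log n ≈ ∑_α log N(α) ≈ (2n+1)^d · ∑_{N(P) ≤ (Dn)^d} log N(P) / N(P)`,

where the error is controlled by the Chebyshev bound `∑_{N(P) ≤ x} log N(P) = O(x)`: the product of
these primes divides the primorial of `x`. Hence `∑_{N(P) ≤ x} log N(P) / N(P) = log x + O(1)`, and
partial summation against `1 / log t` turns this into the asymptotics of `∑ 1 / N(P)`.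
-/

section LatticeBoxes

open Finset Module

variable {ι M : Type*} [Fintype ι] [AddCommGroup M] (b : Basis ι ℤ M)

/-- The cube of side `2 * n` centred at `c` in the lattice `M ≅ ℤ^ι`: the elements whose
`b`-coordinates differ from those of `c` by at most `n`. The size of `x : M` is measured throughout
by the sup norm `‖b.equivFun x‖` of its coordinates. -/
def coordBox [DecidableEq ι] (c : M) (n : ℕ) : Finset M :=
  (Icc (b.equivFun c - n) (b.equivFun c + n)).map b.equivFun.symm.toEquiv.toEmbedding

/-- The subgroup `H` has covering radius at most `r` for the sup norm of the `b`-coordinates. -/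
def HasCoveringRadiusLE (H : AddSubgroup M) (r : ℕ) : Prop :=
  ∀ x : M, ∃ y : M, x - y ∈ H ∧ ‖b.equivFun y‖ ≤ r

variable {b}

lemma norm_le_natCast_iff {v : ι → ℤ} {n : ℕ} : ‖v‖ ≤ n ↔ ∀ i, |v i| ≤ n := by
  rw [pi_norm_le_iff_of_nonneg n.cast_nonneg]
  exact forall_congr' fun i => by rw [Int.norm_eq_abs]; exact_mod_cast Iff.rfl

lemma mem_coordBox [DecidableEq ι] {c x : M} {n : ℕ} :
    x ∈ coordBox b c n ↔ ‖b.equivFun (x - c)‖ ≤ n := by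
  simp only [coordBox, mem_map_equiv, mem_Icc, Pi.le_def, ← forall_and, norm_le_natCast_iff,
    map_sub, Pi.sub_apply, Pi.add_apply, Pi.natCast_apply, abs_sub_le_iff]
  exact forall_congr' fun i => ⟨fun ⟨h, h'⟩ => ⟨sub_left_le_of_le_add h', sub_le_comm.mp h⟩,
    fun ⟨h, h'⟩ => ⟨sub_le_comm.mp h', le_add_of_sub_left_le h⟩⟩

variable (b) in
lemma card_coordBox [DecidableEq ι] (c : M) (n : ℕ) :
    #(coordBox b c n) = (2 * n + 1) ^ Fintype.card ι := by
  have card_Icc_coord (i : ι) :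
      #(Icc ((b.equivFun c - n) i) ((b.equivFun c + n) i)) = 2 * n + 1 := by
    simp only [Int.card_Icc, Pi.sub_apply, Pi.add_apply, Pi.natCast_apply]
    lia
  simp only [coordBox, card_map, Pi.card_Icc, card_Icc_coord, prod_const, card_univ]

variable (b) in
lemma exists_ne_zero_mem_norm_equivFun_le {H : AddSubgroup M} (hH : H.index ≠ 0) {m : ℕ}
    (hm : H.index < (m + 1) ^ Fintype.card ι) :
    ∃ v ∈ H, v ≠ 0 ∧ ‖b.equivFun v‖ ≤ m := by
  classical
  have : Finite (M ⧸ H) := Nat.finite_of_card_ne_zero hH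
  have := Fintype.ofFinite (M ⧸ H)
  have hcard : #(univ : Finset (M ⧸ H)) < #(Icc (0 : ι → ℤ) m) := by
    simpa [Pi.card_Icc, ← Nat.card_eq_fintype_card, ← AddSubgroup.index_eq_card] using hm
  obtain ⟨x, hx, y, hy, hxy, heq⟩ := exists_ne_map_eq_of_card_lt_of_maps_to hcard
    (f := fun v => (b.equivFun.symm v : M ⧸ H)) fun _ _ => mem_univ _
  refine ⟨b.equivFun.symm (y - x), ?_, ?_, ?_⟩
  · rw [map_sub, sub_eq_neg_add]
    exact QuotientAddGroup.eq.mp heq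
  · exact b.equivFun.symm.map_ne_zero_iff.mpr (sub_ne_zero.mpr hxy.symm)
  · rw [LinearEquiv.apply_symm_apply, norm_le_natCast_iff]
    rw [mem_Icc] at hx hy
    exact fun i => abs_sub_le_of_nonneg_of_le (hy.1 i) (hy.2 i) (hx.1 i) (hx.2 i)

lemma HasCoveringRadiusLE.exists_section {H : AddSubgroup M} {r : ℕ}
    (hr : HasCoveringRadiusLE b H r) :
    ∃ g : M ⧸ H → M, ∀ s, (g s : M ⧸ H) = s ∧ ‖b.equivFun (g s)‖ ≤ r := by
  choose y hmem hle using hr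
  refine ⟨fun s => y s.out, fun s => ⟨?_, hle _⟩⟩
  conv_rhs => rw [← QuotientAddGroup.out_eq' s]
  exact QuotientAddGroup.eq.mpr (by rw [neg_add_eq_sub]; exact hmem _)

open scoped Classical in
lemma HasCoveringRadiusLE.index_mul_card_le {H : AddSubgroup M} [H.FiniteIndex] {r : ℕ}
    (hr : HasCoveringRadiusLE b H r) (c : M) (n : ℕ) :
    H.index * #{x ∈ coordBox b c n | x ∈ H} ≤ (2 * (n + r) + 1) ^ Fintype.card ι := by
  obtain ⟨g, hg⟩ := hr.exists_section
  have := Fintype.ofFinite (M ⧸ H)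
  rw [AddSubgroup.index_eq_card, Nat.card_eq_fintype_card, ← card_univ, ← card_product,
    ← card_coordBox b c]
  refine card_le_card_of_injOn (fun p => p.2 + g p.1) ?_ ?_
  · rintro ⟨s, x⟩ hp
    simp only [coe_product, Set.mem_prod, mem_coe, mem_filter, mem_coordBox] at hp ⊢
    rw [add_sub_right_comm, map_add, Nat.cast_add]
    exact norm_add_le_of_le hp.2.1 (hg s).2
  · rintro ⟨s, x⟩ hp ⟨t, y⟩ hq h
    simp only [coe_product, Set.mem_prod, mem_coe, mem_filter] at hp hq h
    have hst := congrArg (QuotientAddGroup.mk (s := H)) h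
    rw [QuotientAddGroup.mk_add, QuotientAddGroup.mk_add, (hg s).1, (hg t).1,
      (QuotientAddGroup.eq_zero_iff x).mpr hp.2.2, (QuotientAddGroup.eq_zero_iff y).mpr hq.2.2,
      zero_add, zero_add] at hst
    subst hst
    simpa using h

open scoped Classical in
lemma HasCoveringRadiusLE.le_index_mul_card {H : AddSubgroup M} [H.FiniteIndex] {r : ℕ}
    (hr : HasCoveringRadiusLE b H r) (c : M) (n : ℕ) :
    (2 * n + 1) ^ Fintype.card ι ≤ H.index * #{x ∈ coordBox b c (n + r) | x ∈ H} := by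
  obtain ⟨g, hg⟩ := hr.exists_section
  have := Fintype.ofFinite (M ⧸ H)
  rw [← card_coordBox b c, AddSubgroup.index_eq_card, Nat.card_eq_fintype_card, ← card_univ,
    ← card_product]
  refine card_le_card_of_injOn (fun x => ((x : M ⧸ H), x - g x)) ?_ ?_
  · intro x hx
    simp only [coe_product, Set.mem_prod, mem_coe, mem_filter, mem_coordBox, mem_univ,
      true_and] at hx ⊢
    constructor
    · rw [sub_right_comm, map_sub, Nat.cast_add]
      exact norm_sub_le_of_le hx (hg x).2
    · rw [← QuotientAddGroup.eq_zero_iff, QuotientAddGroup.mk_sub, (hg x).1, sub_self]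
  · intro x _ y _ h
    obtain ⟨hxy, h⟩ := Prod.mk.injEq .. ▸ h
    rwa [hxy, sub_left_inj] at h

open scoped Classical in
lemma HasCoveringRadiusLE.abs_index_mul_card_sub_le [Nonempty ι] {H : AddSubgroup M}
    [H.FiniteIndex] {r : ℕ} (hr : HasCoveringRadiusLE b H r) (c : M) (n : ℕ) :
    |(H.index * #{x ∈ coordBox b c n | x ∈ H} - (2 * n + 1) ^ Fintype.card ι : ℝ)| ≤
      2 * r * Fintype.card ι * (2 * (n + r) + 1) ^ (Fintype.card ι - 1) := by
  set d := Fintype.card ι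
  have hd : 1 ≤ (d : ℝ) := mod_cast Fintype.card_pos
  have pow_sub_pow_le {s t : ℝ} (hs : 0 ≤ s) (hst : s ≤ t) (hts : t ≤ s + 2 * r)
      (ht : t ≤ 2 * (n + r) + 1) : t ^ d - s ^ d ≤ 2 * r * d * (2 * (n + r) + 1) ^ (d - 1) := by
    refine (le_abs_self _).trans ((abs_pow_sub_pow_le ..).trans ?_)
    rw [abs_of_nonneg (sub_nonneg.mpr hst), abs_of_nonneg hs, abs_of_nonneg (hs.trans hst),
      max_eq_left hst]
    have ht0 := hs.trans hst
    gcongr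
    linarith
  have hupper : (H.index * #{x ∈ coordBox b c n | x ∈ H} : ℝ) ≤ (2 * (n + r) + 1) ^ d :=
    mod_cast hr.index_mul_card_le c n
  rw [abs_sub_le_iff]
  refine ⟨?_, ?_⟩
  · linarith [pow_sub_pow_le (s := 2 * n + 1) (t := 2 * (n + r) + 1) (by positivity) (by linarith)
      (by linarith) le_rfl]
  obtain hrn | hnr := le_or_gt r n
  · obtain ⟨l, rfl⟩ := Nat.exists_eq_add_of_le' hrn
    have hlower : (2 * l + 1 : ℝ) ^ d ≤ H.index * #{x ∈ coordBox b c (l + r) | x ∈ H} :=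
      mod_cast hr.le_index_mul_card c l
    push_cast at pow_sub_pow_le ⊢
    linarith [pow_sub_pow_le (s := 2 * l + 1) (t := 2 * (l + r) + 1) (by positivity) (by linarith)
      (by linarith) (by linarith)]
  · have hnr' : (n + 1 : ℝ) ≤ r := mod_cast hnr
    calc (2 * n + 1 : ℝ) ^ d - H.index * #{x ∈ coordBox b c n | x ∈ H}
        ≤ (2 * n + 1) ^ d := sub_le_self _ (by positivity)
      _ = (2 * n + 1) * (2 * n + 1) ^ (d - 1) := (mul_pow_sub_one Fintype.card_ne_zero _).symm
      _ ≤ 2 * r * 1 * (2 * (n + r) + 1) ^ (d - 1) := by gcongr <;> linarith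
      _ ≤ 2 * r * d * (2 * (n + r) + 1) ^ (d - 1) := by gcongr

end LatticeBoxes

section BoxesAndIdeals

open Finset Module

variable {ι R : Type*} [Fintype ι] [CommRing R]

lemma exists_norm_equivFun_mul_le (b : Basis ι ℤ R) :
    ∃ M : ℕ, ∀ x y, ‖b.equivFun (x * y)‖ ≤ M * ‖b.equivFun x‖ * ‖b.equivFun y‖ := by
  refine ⟨⌈∑ i, ∑ j, ‖b.equivFun (b i * b j)‖⌉₊, fun x y => ?_⟩
  set X := ‖b.equivFun x‖
  set Y := ‖b.equivFun y‖
  have mul_eq_sum : x * y = ∑ i, ∑ j, (b.equivFun x i * b.equivFun y j) • (b i * b j) := by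
    conv_lhs => rw [← b.sum_equivFun x, ← b.sum_equivFun y, Finset.sum_mul_sum]
    simp only [smul_mul_smul_comm]
  calc ‖b.equivFun (x * y)‖
      ≤ ∑ i, ∑ j, ‖(b.equivFun x i * b.equivFun y j) • b.equivFun (b i * b j)‖ := by
        rw [mul_eq_sum]
        simp only [map_sum, map_smul]
        exact (norm_sum_le _ _).trans (sum_le_sum fun i _ => norm_sum_le _ _)
    _ ≤ ∑ i, ∑ j, X * Y * ‖b.equivFun (b i * b j)‖ := by
        gcongr with i _ j _
        rw [norm_smul, norm_mul]
        gcongr <;> exact norm_le_pi_norm _ _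
    _ = (∑ i, ∑ j, ‖b.equivFun (b i * b j)‖) * X * Y := by
        simp only [← mul_sum]
        ring
    _ ≤ ⌈∑ i, ∑ j, ‖b.equivFun (b i * b j)‖⌉₊ * X * Y := by
        gcongr
        exact Nat.le_ceil _

lemma exists_eq_natCast_mul_add (b : Basis ι ℤ R) {N : ℕ} (hN : N ≠ 0) (x : R) :
    ∃ g r : R, x = N * g + r ∧ ‖b.equivFun r‖ ≤ N := by
  refine ⟨b.equivFun.symm fun i => b.equivFun x i / N, b.equivFun.symm fun i => b.equivFun x i % N,
    b.equivFun.injective ?_, ?_⟩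
  · rw [← nsmul_eq_mul, map_add, map_nsmul, LinearEquiv.apply_symm_apply,
      LinearEquiv.apply_symm_apply]
    ext i
    rw [Pi.add_apply, Pi.smul_apply, nsmul_eq_mul, Int.mul_ediv_add_emod]
  · rw [LinearEquiv.apply_symm_apply, norm_le_natCast_iff]
    intro i
    rw [abs_of_nonneg (Int.emod_nonneg _ (mod_cast hN))]
    exact (Int.emod_lt_of_pos _ (mod_cast hN.bot_lt)).le

-- If `N = v * w` is an integer, rounding the coordinates of `x * w / N = x / v` gives `g` with
-- `x - v * g` small.
lemma hasCoveringRadiusLE_of_mem [IsDomain R] {b : Basis ι ℤ R} {M : ℕ}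
    (hM : ∀ x y, ‖b.equivFun (x * y)‖ ≤ M * ‖b.equivFun x‖ * ‖b.equivFun y‖)
    {I : Ideal R} {v : R} (hvI : v ∈ I) (hv : v ≠ 0) {m : ℕ} (hvm : ‖b.equivFun v‖ ≤ m) :
    HasCoveringRadiusLE b I.toAddSubgroup (M * m) := by
  intro x
  have := Module.Free.of_basis b
  have := Module.Finite.of_basis b
  have := Ideal.finiteQuotientOfFreeOfNeBot _ (Ideal.span_singleton_eq_bot.not.mpr hv)
  obtain ⟨N, hN, w, hw⟩ : ∃ N : ℕ, N ≠ 0 ∧ v ∣ N :=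
    ⟨Nat.card (R ⧸ Ideal.span {v}), Nat.card_pos.ne', by
      rw [← Ideal.mem_span_singleton, ← nsmul_one]
      exact (Ideal.span {v}).toAddSubgroup.nsmul_index_mem 1⟩
  obtain ⟨g, r, hgr, hr⟩ := exists_eq_natCast_mul_add b hN (x * w)
  refine ⟨x - v * g, by simpa using I.mul_mem_right g hvI, ?_⟩
  have hmul : (N : ℤ) • (x - v * g) = v * r := by
    rw [natCast_zsmul, nsmul_eq_mul]
    linear_combination x * hw + v * hgr
  have hN0 : (0 : ℝ) < N := mod_cast hN.bot_lt
  refine le_of_mul_le_mul_left ?_ hN0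
  calc N * ‖b.equivFun (x - v * g)‖
      = ‖b.equivFun (v * r)‖ := by
        rw [← hmul, map_smul, norm_smul, Int.norm_natCast]
    _ ≤ M * ‖b.equivFun v‖ * ‖b.equivFun r‖ := hM v r
    _ ≤ M * m * N := by gcongr
    _ = N * (M * m : ℕ) := by push_cast; ring

open scoped Classical in
lemma exists_abs_absNorm_mul_card_sub_le [IsDedekindDomain R] [Free ℤ R] [Nonempty ι]
    (b : Basis ι ℤ R) (D : ℕ) :
    ∃ C : ℝ, 0 ≤ C ∧ ∀ (c : R) (n : ℕ) (I : Ideal R), n ≠ 0 → I ≠ ⊥ →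
      Ideal.absNorm I ≤ (D * n) ^ Fintype.card ι →
      |(Ideal.absNorm I * #{x ∈ coordBox b c n | x ∈ I} - (2 * n + 1) ^ Fintype.card ι : ℝ)| ≤
        C * n ^ (Fintype.card ι - 1) * (Ideal.absNorm I : ℝ) ^ (Fintype.card ι : ℝ)⁻¹ := by
  have := Module.Finite.of_basis b
  obtain ⟨M, hM⟩ := exists_norm_equivFun_mul_le b
  set d := Fintype.card ι
  have hd : d ≠ 0 := Fintype.card_ne_zero
  refine ⟨2 * M * d * (2 * M * D + 3) ^ (d - 1), by positivity, fun c n I hn hI hID => ?_⟩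
  have := I.finiteIndex hI
  set ρ := (Ideal.absNorm I : ℝ) ^ (d : ℝ)⁻¹
  set m := ⌊ρ⌋₊
  have hρ : 0 ≤ ρ := by positivity
  have hρ_pow : ρ ^ d = Ideal.absNorm I := Real.rpow_inv_natCast_pow (by positivity) hd
  have hmρ : (m : ℝ) ≤ ρ := Nat.floor_le hρ
  have hρD : ρ ≤ D * n := by
    refine le_of_pow_le_pow_left₀ hd (by positivity) ?_
    rw [hρ_pow]
    exact_mod_cast hID
  have index_lt : I.toAddSubgroup.index < (m + 1) ^ d := by
    have : (Ideal.absNorm I : ℝ) < (m + 1) ^ d :=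
      hρ_pow ▸ pow_lt_pow_left₀ (Nat.lt_floor_add_one ρ) hρ hd
    exact_mod_cast this
  obtain ⟨v, hvI, hv, hvm⟩ :=
    exists_ne_zero_mem_norm_equivFun_le b AddSubgroup.FiniteIndex.index_ne_zero index_lt
  have hn1 : (1 : ℝ) ≤ n := mod_cast Nat.one_le_iff_ne_zero.mpr hn
  calc (_ : ℝ) ≤ 2 * (M * m : ℕ) * d * (2 * (n + (M * m : ℕ)) + 1) ^ (d - 1) :=
        (hasCoveringRadiusLE_of_mem hM hvI hv hvm).abs_index_mul_card_sub_le c n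
    _ ≤ 2 * (M * ρ) * d * ((2 * M * D + 3) * n) ^ (d - 1) := by
        push_cast
        gcongr
        nlinarith [mul_le_mul_of_nonneg_left (hmρ.trans hρD) M.cast_nonneg]
    _ = 2 * M * d * (2 * M * D + 3) ^ (d - 1) * n ^ (d - 1) * ρ := by
        rw [mul_pow]
        ring

end BoxesAndIdeals

section RealSums

open Finset

lemma sum_mul_le_of_sum_le {a f : ℕ → ℝ} {C : ℝ} (ha : ∀ n : ℕ, ∑ k ∈ Icc 1 n, a k ≤ C * n)
    (hf : AntitoneOn f (Set.Ici 1)) (hf0 : ∀ k, 1 ≤ k → 0 ≤ f k) (n : ℕ) :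
    ∑ k ∈ Icc 1 n, a k * f k ≤ C * ∑ k ∈ Icc 1 n, f k := by
  have sum_nonneg (n : ℕ) : 0 ≤ ∑ k ∈ Icc 1 n, (C - a k) := by
    simpa [sum_sub_distrib, mul_comm] using ha n
  have key : ∀ n, 1 ≤ n →
      (∑ k ∈ Icc 1 n, (C - a k)) * f n ≤ ∑ k ∈ Icc 1 n, (C - a k) * f k := by
    intro n hn
    induction n, hn using Nat.le_induction with
    | base => simp
    | succ n hn ih =>
      rw [sum_Icc_succ_top n.succ_pos, sum_Icc_succ_top n.succ_pos, add_mul]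
      gcongr
      exact (mul_le_mul_of_nonneg_left (hf hn (hn.trans n.le_succ) n.le_succ)
        (sum_nonneg n)).trans ih
  obtain rfl | hn := n.eq_zero_or_pos
  · simp
  · have := (mul_nonneg (sum_nonneg n) (hf0 n hn)).trans (key n hn)
    simp only [sub_mul, sum_sub_distrib, ← mul_sum] at this
    linarith

lemma sum_rpow_sub_one_le {s : ℝ} (hs : 0 < s) (hs1 : s ≤ 1) (n : ℕ) :
    ∑ k ∈ Icc 1 n, (k : ℝ) ^ (s - 1) ≤ n ^ s / s := by
  induction n with
  | zero => simp [Real.zero_rpow hs.ne']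
  | succ n ih =>
    have hn : (0 : ℝ) < n + 1 := by positivity
    have hinv : (n + 1 : ℝ)⁻¹ ≤ 1 := inv_le_one_of_one_le₀ (by simp)
    have bernoulli : (n : ℝ) ^ s ≤ (n + 1) ^ s - s * (n + 1) ^ (s - 1) :=
      calc (n : ℝ) ^ s = (n + 1) ^ s * (1 + -(n + 1 : ℝ)⁻¹) ^ s := by
            rw [← Real.mul_rpow hn.le (by linarith)]
            congr 1
            field_simp
            ring
        _ ≤ (n + 1) ^ s * (1 + s * -(n + 1 : ℝ)⁻¹) := by
            gcongr
            exact rpow_one_add_le_one_add_mul_self (neg_le_neg hinv) hs.le hs1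
        _ = (n + 1) ^ s - s * (n + 1) ^ (s - 1) := by
            rw [Real.rpow_sub_one hn.ne']
            ring
    rw [sum_Icc_succ_top n.succ_pos, Nat.cast_succ]
    rw [le_div_iff₀ hs] at ih ⊢
    linarith

lemma sum_Icc_two_inv_pow_le {q : ℝ} (hq : 2 ≤ q) (n : ℕ) :
    ∑ k ∈ Icc 2 n, (q ^ k)⁻¹ ≤ 2 / q ^ 2 := by
  have hinv : q⁻¹ ≤ 2⁻¹ := inv_anti₀ two_pos hq
  have : 0 < q := two_pos.trans_le hq
  calc ∑ k ∈ Icc 2 n, (q ^ k)⁻¹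
      = ∑ k ∈ Ico 2 (n + 1), q⁻¹ ^ k := by simp only [inv_pow]; rfl
    _ ≤ q⁻¹ ^ 2 / (1 - q⁻¹) := geom_sum_Ico_le_of_lt_one (by positivity) (by linarith)
    _ ≤ q⁻¹ ^ 2 / 2⁻¹ := by gcongr; linarith
    _ = 2 / q ^ 2 := by field_simp

end RealSums

section PrimeIdeals

open Finset Module UniqueFactorizationMonoid

variable {R : Type*} [CommRing R] [IsDedekindDomain R]

open scoped Classical in
lemma le_pow_iff_le_count_normalizedFactors {P J : Ideal R} {k : ℕ} (hP : Prime P) (hJ : J ≠ ⊥) :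
    J ≤ P ^ k ↔ k ≤ (normalizedFactors J).count P := by
  rw [← Ideal.dvd_iff_le, pow_dvd_iff_le_emultiplicity,
    emultiplicity_eq_count_normalizedFactors hP.irreducible hJ, normalize_eq, Nat.cast_le]

variable [Free ℤ R] [Module.Finite ℤ R]

lemma absNorm_le_of_le {I J : Ideal R} (hJ : J ≠ ⊥) (h : J ≤ I) :
    Ideal.absNorm I ≤ Ideal.absNorm J :=
  Nat.le_of_dvd (Nat.pos_of_ne_zero (Ideal.absNorm_eq_zero_iff.not.mpr hJ))
    (Ideal.absNorm_dvd_absNorm_of_le h)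

variable [CharZero R]

variable (R) in
/-- The finite set of nonzero prime ideals of `R` of norm at most `N`. -/
def primeIdealsLE (N : ℕ) : Finset (Ideal R) :=
  Set.Finite.toFinset (s := {P : Ideal R | P.IsPrime ∧ P ≠ ⊥ ∧ Ideal.absNorm P ≤ N})
    ((Ideal.finite_setOfPred_absNorm_le N).subset fun _ hP => hP.2.2)

lemma mem_primeIdealsLE {P : Ideal R} {N : ℕ} :
    P ∈ primeIdealsLE R N ↔ P.IsPrime ∧ P ≠ ⊥ ∧ Ideal.absNorm P ≤ N := by
  simp only [primeIdealsLE, Set.Finite.mem_toFinset, Set.mem_ofPred_eq]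

lemma primeIdealsLE_mono {M N : ℕ} (h : M ≤ N) : primeIdealsLE R M ⊆ primeIdealsLE R N :=
  fun _ hP => mem_primeIdealsLE.mpr <|
    (mem_primeIdealsLE.mp hP).imp_right <| And.imp_right (·.trans h)

lemma prime_of_mem_primeIdealsLE {P : Ideal R} {N : ℕ} (hP : P ∈ primeIdealsLE R N) : Prime P :=
  have ⟨hprime, hbot, _⟩ := mem_primeIdealsLE.mp hP
  Ideal.prime_of_isPrime hbot hprime

lemma two_le_absNorm_of_mem_primeIdealsLE {P : Ideal R} {N : ℕ} (hP : P ∈ primeIdealsLE R N) :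
    2 ≤ Ideal.absNorm P := by
  have ⟨hprime, hbot, _⟩ := mem_primeIdealsLE.mp hP
  exact (Nat.two_le_iff _).mpr
    ⟨Ideal.absNorm_eq_zero_iff.not.mpr hbot, Ideal.absNorm_eq_one_iff.not.mpr hprime.ne_top⟩

variable (R) in
/-- The number of prime ideals of `R` of norm exactly `k`. -/
def primeIdealCount (k : ℕ) : ℕ :=
  #{P ∈ primeIdealsLE R k | Ideal.absNorm P = k}

variable (R) in
lemma sum_primeIdealsLE {a : ℕ} (ha : a ≤ 2) (h : ℕ → ℝ) (N : ℕ) :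
    ∑ P ∈ primeIdealsLE R N, h (Ideal.absNorm P) =
      ∑ k ∈ Icc a N, primeIdealCount R k * h k := by
  rw [← sum_fiberwise_of_maps_to (t := Icc a N) (g := Ideal.absNorm) fun P hP => mem_Icc.mpr
    ⟨ha.trans (two_le_absNorm_of_mem_primeIdealsLE hP), (mem_primeIdealsLE.mp hP).2.2⟩]
  refine sum_congr rfl fun k hk => ?_
  have hfiber : {P ∈ primeIdealsLE R N | Ideal.absNorm P = k} =
      {P ∈ primeIdealsLE R k | Ideal.absNorm P = k} := by
    ext P
    simp only [mem_filter, mem_primeIdealsLE]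
    exact and_congr_left fun hPk => by simp only [hPk, (mem_Icc.mp hk).2, le_refl]
  rw [hfiber, sum_congr rfl fun P hP => by rw [(mem_filter.mp hP).2], sum_const, nsmul_eq_mul,
    primeIdealCount]

lemma dvd_span_primorial {P : Ideal R} {N : ℕ} (hP : P ∈ primeIdealsLE R N) :
    P ∣ Ideal.span {(primorial N : R)} := by
  have ⟨hprime, hbot, hle⟩ := mem_primeIdealsLE.mp hP
  have hN0 : Ideal.absNorm P ≠ 0 := Ideal.absNorm_eq_zero_iff.not.mpr hbot
  have hmem : (∏ p ∈ (Ideal.absNorm P).primeFactors, (p : R) ^ (Ideal.absNorm P).factorization p) ∈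
      P := by
    convert Ideal.absNorm_mem P
    conv_rhs => rw [← Nat.prod_factorization_pow_eq_self hN0]
    simp [Finsupp.prod]
  obtain ⟨p, hp, hpP⟩ := Ideal.IsPrime.prod_mem_iff.mp hmem
  rw [Ideal.dvd_span_singleton]
  refine P.mem_of_dvd (Nat.cast_dvd_cast ?_) (hprime.mem_of_pow_mem _ hpP)
  exact (Nat.prime_of_mem_primeFactors hp).dvd_primorial_iff.mpr
    ((Nat.le_of_mem_primeFactors hp).trans hle)

variable (R) in
lemma sum_log_absNorm_le (N : ℕ) :
    ∑ P ∈ primeIdealsLE R N, Real.log (Ideal.absNorm P) ≤ finrank ℤ R * Real.log 4 * N := by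
  have hdvd : ∏ P ∈ primeIdealsLE R N, P ∣ Ideal.span {(primorial N : R)} :=
    prod_primes_dvd _ (fun _ => prime_of_mem_primeIdealsLE) fun _ => dvd_span_primorial
  have hprod : ∏ P ∈ primeIdealsLE R N, Ideal.absNorm P ≤ primorial N ^ finrank ℤ R := by
    rw [← map_prod, ← Ideal.absNorm_span_natCast]
    refine Nat.le_of_dvd (Nat.pos_of_ne_zero ?_) (map_dvd Ideal.absNorm hdvd)
    simp [primorial_ne_zero]
  have hpos : ∀ P ∈ primeIdealsLE R N, 0 < Ideal.absNorm P := fun P hP =>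
    two_pos.trans_le (two_le_absNorm_of_mem_primeIdealsLE hP)
  calc ∑ P ∈ primeIdealsLE R N, Real.log (Ideal.absNorm P)
      = Real.log (∏ P ∈ primeIdealsLE R N, Ideal.absNorm P : ℕ) := by
        rw [Nat.cast_prod, Real.log_prod fun P hP => mod_cast (hpos P hP).ne']
    _ ≤ Real.log (((4 : ℝ) ^ N) ^ finrank ℤ R) := by
        refine Real.log_le_log (mod_cast prod_pos hpos) ?_
        exact_mod_cast hprod.trans (Nat.pow_le_pow_left (primorial_le_four_pow N) _)
    _ = finrank ℤ R * Real.log 4 * N := by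
        rw [Real.log_pow, Real.log_pow]
        ring

variable (R) in
lemma sum_log_absNorm_mul_le {f : ℕ → ℝ} (hf : AntitoneOn f (Set.Ici 1))
    (hf0 : ∀ k, 1 ≤ k → 0 ≤ f k) (N : ℕ) :
    ∑ P ∈ primeIdealsLE R N, Real.log (Ideal.absNorm P) * f (Ideal.absNorm P) ≤
      finrank ℤ R * Real.log 4 * ∑ k ∈ Icc 1 N, f k := by
  rw [sum_primeIdealsLE R one_le_two fun k => Real.log k * f k]
  simp only [← mul_assoc]
  refine sum_mul_le_of_sum_le (fun n => ?_) hf hf0 N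
  rw [← sum_primeIdealsLE R one_le_two fun k => Real.log k]
  exact sum_log_absNorm_le R n

variable (R) in
lemma sum_log_absNorm_mul_rpow_le {s : ℝ} (hs : 0 < s) (hs1 : s ≤ 1) (N : ℕ) :
    ∑ P ∈ primeIdealsLE R N, Real.log (Ideal.absNorm P) * (Ideal.absNorm P : ℝ) ^ (s - 1) ≤
      finrank ℤ R * Real.log 4 * (N ^ s / s) := by
  refine (sum_log_absNorm_mul_le R (f := fun k => (k : ℝ) ^ (s - 1)) ?_ (fun k _ => by positivity)
    N).trans ?_
  · intro k hk l _ hkl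
    exact Real.rpow_le_rpow_of_nonpos (mod_cast hk) (mod_cast hkl) (by linarith)
  · gcongr
    exact sum_rpow_sub_one_le hs hs1 N

variable (R) in
lemma sum_log_absNorm_div_sq_le (N : ℕ) :
    ∑ P ∈ primeIdealsLE R N, Real.log (Ideal.absNorm P) / (Ideal.absNorm P : ℝ) ^ 2 ≤
      finrank ℤ R * Real.log 4 * 2 := by
  refine (sum_log_absNorm_mul_le R (f := fun k => ((k : ℝ) ^ 2)⁻¹) ?_ (fun k _ => by positivity)
    N).trans ?_
  · intro k hk l _ hkl
    have : (0 : ℝ) < k := mod_cast hk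
    dsimp only
    gcongr
  · gcongr
    rw [show Icc 1 N = Ioo 0 (N + 1) from rfl]
    simpa using sum_Ioo_inv_sq_le (α := ℝ) 0 (N + 1)

variable (R) in
lemma sum_log_absNorm_div_sub_sum_le {x : ℝ} (hx : 0 < x) {N : ℕ} (hN : ⌊x⌋₊ ≤ N) :
    ∑ P ∈ primeIdealsLE R N, Real.log (Ideal.absNorm P) / Ideal.absNorm P -
      ∑ P ∈ primeIdealsLE R ⌊x⌋₊, Real.log (Ideal.absNorm P) / Ideal.absNorm P ≤
        finrank ℤ R * Real.log 4 * (N / x) := by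
  classical
  rw [← sum_sdiff (primeIdealsLE_mono hN), add_sub_cancel_right]
  calc _ ≤ ∑ P ∈ primeIdealsLE R N \ primeIdealsLE R ⌊x⌋₊, Real.log (Ideal.absNorm P) / x := by
        gcongr with P hP
        obtain ⟨hPN, hPx⟩ := mem_sdiff.mp hP
        have ⟨hprime, hbot, _⟩ := mem_primeIdealsLE.mp hPN
        by_contra! hlt
        exact hPx (mem_primeIdealsLE.mpr ⟨hprime, hbot, Nat.le_floor hlt.le⟩)
    _ ≤ ∑ P ∈ primeIdealsLE R N, Real.log (Ideal.absNorm P) / x :=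
        sum_le_sum_of_subset_of_nonneg sdiff_subset fun _ _ _ => by positivity
    _ ≤ _ := by
        rw [← sum_div, ← mul_div_assoc]
        gcongr
        exact sum_log_absNorm_le R N

open scoped Classical in
lemma absNorm_eq_prod_primeIdealsLE {J : Ideal R} {X : ℕ} (hJ : J ≠ ⊥) (hX : Ideal.absNorm J ≤ X) :
    Ideal.absNorm J = ∏ P ∈ primeIdealsLE R X, Ideal.absNorm P ^ (normalizedFactors J).count P := by
  conv_lhs => rw [← Ideal.prod_normalizedFactors_eq_self hJ]
  rw [map_multiset_prod, prod_multiset_map_count]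
  refine prod_subset (fun P hP => ?_) fun P _ hP => ?_
  · rw [Multiset.mem_toFinset] at hP
    have hprime := prime_of_normalized_factor P hP
    have hle := absNorm_le_of_le hJ (Ideal.le_of_dvd (dvd_of_mem_normalizedFactors hP))
    exact mem_primeIdealsLE.mpr ⟨Ideal.isPrime_of_prime hprime, hprime.ne_zero, hle.trans hX⟩
  · rw [Multiset.count_eq_zero_of_notMem (by rwa [Multiset.mem_toFinset] at hP), pow_zero]

lemma lt_absNorm_pow {P : Ideal R} {N : ℕ} (hP : P ∈ primeIdealsLE R N) (k : ℕ) :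
    k < Ideal.absNorm (P ^ k) := by
  rw [map_pow]
  exact Nat.lt_pow_self (two_le_absNorm_of_mem_primeIdealsLE hP)

open scoped Classical in
lemma log_absNorm_eq_sum {J : Ideal R} {X : ℕ} (hJ : J ≠ ⊥) (hX : Ideal.absNorm J ≤ X) :
    Real.log (Ideal.absNorm J) =
      ∑ P ∈ primeIdealsLE R X, Real.log (Ideal.absNorm P) * #{k ∈ Icc 1 X | J ≤ P ^ k} := by
  conv_lhs => rw [absNorm_eq_prod_primeIdealsLE hJ hX, Nat.cast_prod]
  rw [Real.log_prod fun P hP => by have := two_le_absNorm_of_mem_primeIdealsLE hP; positivity]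
  refine sum_congr rfl fun P hP => ?_
  have hpowers : {k ∈ Icc 1 X | J ≤ P ^ k} = Icc 1 ((normalizedFactors J).count P) := by
    ext k
    rw [mem_filter, mem_Icc, mem_Icc, and_assoc, and_congr_right_iff,
      ← le_pow_iff_le_count_normalizedFactors (prime_of_mem_primeIdealsLE hP) hJ]
    exact fun _ => and_iff_right_of_imp fun hk =>
      (lt_absNorm_pow hP k).le.trans ((absNorm_le_of_le hJ hk).trans hX)
  rw [hpowers, Nat.card_Icc, Nat.add_sub_cancel, Nat.cast_pow, Real.log_pow, mul_comm]

open scoped Classical in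
lemma sum_log_absNorm_span {S : Finset R} {X : ℕ} (hS : 0 ∉ S)
    (hX : ∀ α ∈ S, Ideal.absNorm (Ideal.span {α}) ≤ X) :
    ∑ α ∈ S, Real.log (Ideal.absNorm (Ideal.span {α})) =
      ∑ P ∈ primeIdealsLE R X, Real.log (Ideal.absNorm P) *
        ∑ k ∈ Icc 1 X, (#{α ∈ S | α ∈ P ^ k} : ℝ) := by
  calc ∑ α ∈ S, Real.log (Ideal.absNorm (Ideal.span {α}))
      = ∑ α ∈ S, ∑ P ∈ primeIdealsLE R X,
          Real.log (Ideal.absNorm P) * #{k ∈ Icc 1 X | α ∈ P ^ k} := by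
        refine sum_congr rfl fun α hα => ?_
        have hα0 : Ideal.span {α} ≠ ⊥ :=
          Ideal.span_singleton_eq_bot.not.mpr (ne_of_mem_of_not_mem hα hS)
        simp only [log_absNorm_eq_sum hα0 (hX α hα), Ideal.span_singleton_le_iff_mem]
    _ = _ := by
        rw [sum_comm]
        refine sum_congr rfl fun P _ => ?_
        rw [← mul_sum]
        congr 1
        exact_mod_cast sum_card_bipartiteAbove_eq_sum_card_bipartiteBelow fun α k => α ∈ P ^ k

end PrimeIdeals

section Sieve

open Finset Module

variable {R : Type*} [CommRing R] [IsDedekindDomain R] [Free ℤ R]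

open scoped Classical in
/-- The finite set `S` is equidistributed modulo every nonzero ideal `I` of norm at most `X`: the
proportion of its elements that lie in `I` is `1 / N(I)`, with a relative error at most
`B * (N(I) / X) ^ s`. -/
def IsEquidistributedModIdeals (S : Finset R) (X : ℕ) (s B : ℝ) : Prop :=
  ∀ I : Ideal R, I ≠ ⊥ → Ideal.absNorm I ≤ X →
    |(Ideal.absNorm I * #{α ∈ S | α ∈ I} - #S : ℝ)| ≤ B * (Ideal.absNorm I / X : ℝ) ^ s * #S

namespace IsEquidistributedModIdeals

variable [Module.Finite ℤ R] {S : Finset R} {X : ℕ} {s B : ℝ}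

open scoped Classical in
lemma card_filter_mem_le (h : IsEquidistributedModIdeals S X s B) (hs : 0 ≤ s) (hB : 0 ≤ B)
    (hS : 0 ∉ S) (hX : ∀ α ∈ S, Ideal.absNorm (Ideal.span {α}) ≤ X) {I : Ideal R} (hI : I ≠ ⊥) :
    (#{α ∈ S | α ∈ I} : ℝ) ≤ (1 + B) * #S * (Ideal.absNorm I : ℝ)⁻¹ := by
  obtain hempty | ⟨α, hα⟩ := {α ∈ S | α ∈ I}.eq_empty_or_nonempty
  · rw [hempty, card_empty, Nat.cast_zero]
    positivity
  obtain ⟨hαS, hαI⟩ := mem_filter.mp hα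
  have hIX : Ideal.absNorm I ≤ X :=
    (absNorm_le_of_le (Ideal.span_singleton_eq_bot.not.mpr (ne_of_mem_of_not_mem hαS hS))
      ((Ideal.span_singleton_le_iff_mem I).mpr hαI)).trans (hX α hαS)
  have hratio : (Ideal.absNorm I / X : ℝ) ^ s ≤ 1 :=
    Real.rpow_le_one (by positivity) (div_le_one_of_le₀ (mod_cast hIX) X.cast_nonneg) hs
  have herror : B * (Ideal.absNorm I / X : ℝ) ^ s * #S ≤ B * 1 * #S := by gcongr
  have hI0 : (0 : ℝ) < Ideal.absNorm I :=
    mod_cast Nat.pos_of_ne_zero (Ideal.absNorm_eq_zero_iff.not.mpr hI)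
  rw [← div_eq_mul_inv, le_div_iff₀ hI0]
  linarith [(le_abs_self _).trans (h I hI hIX)]

variable [CharZero R]

open scoped Classical in
lemma sum_log_mul_sum_card_pow_le (h : IsEquidistributedModIdeals S X s B) (hs : 0 ≤ s)
    (hB : 0 ≤ B) (hS : 0 ∉ S) (hX : ∀ α ∈ S, Ideal.absNorm (Ideal.span {α}) ≤ X) :
    ∑ P ∈ primeIdealsLE R X, Real.log (Ideal.absNorm P) *
      ∑ k ∈ Icc 2 X, (#{α ∈ S | α ∈ P ^ k} : ℝ) ≤
        finrank ℤ R * Real.log 4 * (4 * (1 + B)) * #S := by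
  calc _ ≤ ∑ P ∈ primeIdealsLE R X, Real.log (Ideal.absNorm P) *
          ((1 + B) * #S * (2 / (Ideal.absNorm P : ℝ) ^ 2)) := by
        gcongr with P hP
        calc ∑ k ∈ Icc 2 X, (#{α ∈ S | α ∈ P ^ k} : ℝ)
            ≤ ∑ k ∈ Icc 2 X, (1 + B) * #S * ((Ideal.absNorm P : ℝ) ^ k)⁻¹ := by
              gcongr with k _
              rw [← Nat.cast_pow, ← map_pow]
              exact h.card_filter_mem_le hs hB hS hX
                (pow_ne_zero k (prime_of_mem_primeIdealsLE hP).ne_zero)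
          _ ≤ (1 + B) * #S * (2 / (Ideal.absNorm P : ℝ) ^ 2) := by
              rw [← mul_sum]
              gcongr
              exact sum_Icc_two_inv_pow_le (mod_cast two_le_absNorm_of_mem_primeIdealsLE hP) X
    _ = 2 * (1 + B) * #S *
          ∑ P ∈ primeIdealsLE R X, Real.log (Ideal.absNorm P) / (Ideal.absNorm P : ℝ) ^ 2 := by
        rw [mul_sum]
        exact sum_congr rfl fun P _ => by ring
    _ ≤ 2 * (1 + B) * #S * (finrank ℤ R * Real.log 4 * 2) := by
        gcongr
        exact sum_log_absNorm_div_sq_le R X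
    _ = _ := by ring

open scoped Classical in
lemma abs_sum_log_mul_card_sub_le (h : IsEquidistributedModIdeals S X s B) (hs : 0 < s)
    (hs1 : s ≤ 1) (hB : 0 ≤ B) :
    |∑ P ∈ primeIdealsLE R X, Real.log (Ideal.absNorm P) * #{α ∈ S | α ∈ P} -
      #S * ∑ P ∈ primeIdealsLE R X, Real.log (Ideal.absNorm P) / Ideal.absNorm P| ≤
        finrank ℤ R * Real.log 4 * (B / s) * #S := by
  rw [mul_sum, ← sum_sub_distrib]
  calc _ ≤ ∑ P ∈ primeIdealsLE R X, B * #S / (X : ℝ) ^ s *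
          (Real.log (Ideal.absNorm P) * (Ideal.absNorm P : ℝ) ^ (s - 1)) := by
        refine (abs_sum_le_sum_abs _ _).trans (sum_le_sum fun P hP => ?_)
        obtain ⟨-, hbot, hle⟩ := mem_primeIdealsLE.mp hP
        have hN : (0 : ℝ) < Ideal.absNorm P :=
          mod_cast two_pos.trans_le (two_le_absNorm_of_mem_primeIdealsLE hP)
        set ℓ := Real.log (Ideal.absNorm P) / Ideal.absNorm P
        have hℓ : 0 ≤ ℓ := by positivity
        calc |Real.log (Ideal.absNorm P) * #{α ∈ S | α ∈ P} - #S * ℓ|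
            = ℓ * |(Ideal.absNorm P * #{α ∈ S | α ∈ P} - #S : ℝ)| := by
              rw [← abs_of_nonneg hℓ, ← abs_mul, abs_of_nonneg hℓ]
              congr 1
              simp only [ℓ]
              field_simp
          _ ≤ ℓ * (B * (Ideal.absNorm P / X : ℝ) ^ s * #S) := by
              gcongr
              exact h P hbot hle
          _ = _ := by
              rw [Real.div_rpow hN.le X.cast_nonneg, Real.rpow_sub_one hN.ne']
              ring
    _ ≤ B * #S / (X : ℝ) ^ s * (finrank ℤ R * Real.log 4 * (X ^ s / s)) := by
        rw [← mul_sum]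
        gcongr
        exact sum_log_absNorm_mul_rpow_le R hs hs1 X
    _ = finrank ℤ R * Real.log 4 * (B / s) * #S * ((X : ℝ) ^ s / (X : ℝ) ^ s) := by ring
    _ ≤ finrank ℤ R * Real.log 4 * (B / s) * #S :=
        mul_le_of_le_one_right (by positivity) (div_self_le_one _)

lemma abs_sum_log_absNorm_span_sub_le (h : IsEquidistributedModIdeals S X s B) (hs : 0 < s)
    (hs1 : s ≤ 1) (hB : 0 ≤ B) (hS : 0 ∉ S)
    (hX : ∀ α ∈ S, Ideal.absNorm (Ideal.span {α}) ≤ X) :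
    |∑ α ∈ S, Real.log (Ideal.absNorm (Ideal.span {α})) -
      #S * ∑ P ∈ primeIdealsLE R X, Real.log (Ideal.absNorm P) / Ideal.absNorm P| ≤
        finrank ℤ R * Real.log 4 * (B / s + 4 * (1 + B)) * #S := by
  classical
  have split_powers : ∑ α ∈ S, Real.log (Ideal.absNorm (Ideal.span {α})) =
      ∑ P ∈ primeIdealsLE R X, Real.log (Ideal.absNorm P) * #{α ∈ S | α ∈ P} +
      ∑ P ∈ primeIdealsLE R X, Real.log (Ideal.absNorm P) *
        ∑ k ∈ Icc 2 X, (#{α ∈ S | α ∈ P ^ k} : ℝ) := by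
    rw [sum_log_absNorm_span hS hX, ← sum_add_distrib]
    refine sum_congr rfl fun P hP => ?_
    have hX1 : 1 ≤ X := one_le_two.trans
      ((two_le_absNorm_of_mem_primeIdealsLE hP).trans (mem_primeIdealsLE.mp hP).2.2)
    rw [← mul_add, ← add_sum_Ioc_eq_sum_Icc hX1, pow_one]
    rfl
  have hpowers : 0 ≤ ∑ P ∈ primeIdealsLE R X, Real.log (Ideal.absNorm P) *
      ∑ k ∈ Icc 2 X, (#{α ∈ S | α ∈ P ^ k} : ℝ) := by positivity
  rw [split_powers, add_sub_right_comm]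
  calc _ ≤ finrank ℤ R * Real.log 4 * (B / s) * #S +
          finrank ℤ R * Real.log 4 * (4 * (1 + B)) * #S := by
        refine (abs_add_le _ _).trans (add_le_add (h.abs_sum_log_mul_card_sub_le hs hs1 hB) ?_)
        rw [abs_of_nonneg hpowers]
        exact h.sum_log_mul_sum_card_pow_le hs.le hB hS hX
    _ = _ := by ring

lemma abs_sum_log_absNorm_div_sub_le (h : IsEquidistributedModIdeals S X s B) (hs : 0 < s)
    (hs1 : s ≤ 1) (hB : 0 ≤ B) (hne : S.Nonempty) (hS : 0 ∉ S)
    (hX : ∀ α ∈ S, Ideal.absNorm (Ideal.span {α}) ≤ X) {l e : ℝ}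
    (hl : ∀ α ∈ S, |Real.log (Ideal.absNorm (Ideal.span {α})) - l| ≤ e) :
    |∑ P ∈ primeIdealsLE R X, Real.log (Ideal.absNorm P) / Ideal.absNorm P - l| ≤
      finrank ℤ R * Real.log 4 * (B / s + 4 * (1 + B)) + e := by
  have hcard : (0 : ℝ) < #S := mod_cast hne.card_pos
  have hsum : |∑ α ∈ S, Real.log (Ideal.absNorm (Ideal.span {α})) - #S * l| ≤ e * #S := by
    rw [← nsmul_eq_mul, ← sum_const, ← sum_sub_distrib, mul_comm, ← nsmul_eq_mul]
    exact (abs_sum_le_sum_abs _ _).trans (sum_le_card_nsmul S _ e hl)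
  refine le_of_mul_le_mul_right ?_ hcard
  calc _ = |#S * ∑ P ∈ primeIdealsLE R X, Real.log (Ideal.absNorm P) / Ideal.absNorm P -
            #S * l| := by
        rw [← mul_sub, abs_mul, abs_of_pos hcard, mul_comm]
    _ ≤ finrank ℤ R * Real.log 4 * (B / s + 4 * (1 + B)) * #S + e * #S := by
        refine (abs_sub_le _ (∑ α ∈ S, Real.log (Ideal.absNorm (Ideal.span {α}))) _).trans ?_
        rw [abs_sub_comm]
        exact add_le_add (h.abs_sum_log_absNorm_span_sub_le hs hs1 hB hS hX) hsum
    _ = _ := by ring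

end IsEquidistributedModIdeals

lemma exists_isEquidistributedModIdeals_coordBox {ι : Type*} [Fintype ι] [DecidableEq ι]
    [Nonempty ι] (b : Basis ι ℤ R) {D : ℕ} (hD : D ≠ 0) :
    ∃ B : ℝ, 0 ≤ B ∧ ∀ (c : R) (n : ℕ), n ≠ 0 →
      IsEquidistributedModIdeals (coordBox b c n) ((D * n) ^ Fintype.card ι)
        (Fintype.card ι : ℝ)⁻¹ B := by
  obtain ⟨C, hC, hcount⟩ := exists_abs_absNorm_mul_card_sub_le b D
  set d := Fintype.card ι
  have hd : d ≠ 0 := Fintype.card_ne_zero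
  refine ⟨C * D, by positivity, fun c n hn I hI hID => ?_⟩
  set ρ := (Ideal.absNorm I : ℝ) ^ (d : ℝ)⁻¹
  have hratio : (Ideal.absNorm I / ((D * n) ^ d : ℕ) : ℝ) ^ (d : ℝ)⁻¹ = ρ / (D * n) := by
    push_cast
    rw [Real.div_rpow (by positivity) (by positivity),
      Real.pow_rpow_inv_natCast (by positivity) hd]
  rw [card_coordBox, hratio]
  push_cast
  calc _ ≤ C * n ^ (d - 1) * ρ := by convert hcount c n I hn hI hID
    _ = C * D * (ρ / (D * n)) * n ^ d := by
        rw [← mul_pow_sub_one hd]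
        field_simp
    _ ≤ C * D * (ρ / (D * n)) * (2 * n + 1) ^ d := by
        gcongr
        linarith [n.cast_nonneg (α := ℝ)]

end Sieve

section NormsInBoxes

open Finset Module NumberField

variable {K : Type*} [Field K] [NumberField K]

lemma absNorm_span_eq_prod_norm_embedding (α : 𝓞 K) :
    (Ideal.absNorm (Ideal.span {α}) : ℝ) = ∏ σ : K →ₐ[ℚ] ℂ, ‖σ α‖ := by
  rw [Ideal.absNorm_span_singleton, ← norm_prod, ← Algebra.norm_eq_prod_embeddings ℚ ℂ,
    ← Algebra.coe_norm_int, Nat.cast_natAbs]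
  simp

lemma absNorm_span_mem_Icc_of_house_sub_le {α : 𝓞 K} {c : ℕ} {r : ℝ} (hrc : r ≤ c)
    (hα : house (α - c : K) ≤ r) :
    (Ideal.absNorm (Ideal.span {α}) : ℝ) ∈
      Set.Icc ((c - r) ^ finrank ℚ K) ((c + r) ^ finrank ℚ K) := by
  have norm_mem (σ : K →ₐ[ℚ] ℂ) : ‖σ α‖ ∈ Set.Icc (c - r) (c + r) := by
    have hσ : ‖σ α - c‖ ≤ r := by
      simpa using (norm_embedding_le_house (α - c : K) σ.toRingHom).trans hα
    rw [← Set.mem_Icc_iff_abs_le, abs_sub_comm]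
    simpa using (abs_norm_sub_norm_le (σ α) c).trans hσ
  rw [absNorm_span_eq_prod_norm_embedding, ← AlgHom.card ℚ K ℂ, ← card_univ, ← prod_const,
    ← prod_const]
  exact ⟨prod_le_prod (fun _ _ => sub_nonneg.mpr hrc) fun σ _ => (norm_mem σ).1,
    prod_le_prod (fun _ _ => norm_nonneg _) fun σ _ => (norm_mem σ).2⟩

variable {ι : Type*} [Fintype ι] (b : Basis ι ℤ (𝓞 K))

lemma exists_house_le_mul_norm_equivFun :
    ∃ B : ℕ, ∀ x : 𝓞 K, house (x : K) ≤ B * ‖b.equivFun x‖ := by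
  refine ⟨⌈∑ i, house (b i : K)⌉₊, fun x => ?_⟩
  calc house (x : K) = house (∑ i, (b.equivFun x i : K) * (b i : K)) := by
        conv_lhs => rw [← b.sum_equivFun x]
        simp only [map_sum, zsmul_eq_mul, map_mul, map_intCast]
    _ ≤ ∑ i, ‖b.equivFun x‖ * house (b i : K) := by
        refine (house_sum_le_sum_house _ _).trans (sum_le_sum fun i _ => ?_)
        refine (house_mul_le _ _).trans (mul_le_mul_of_nonneg_right ?_ (house_nonneg _))
        rw [house_intCast, Int.cast_abs, ← Int.norm_eq_abs]
        exact norm_le_pi_norm _ i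
    _ = (∑ i, house (b i : K)) * ‖b.equivFun x‖ := by rw [← mul_sum, mul_comm]
    _ ≤ ⌈∑ i, house (b i : K)⌉₊ * ‖b.equivFun x‖ := by
        gcongr
        exact Nat.le_ceil _

lemma exists_absNorm_span_mem_Icc_of_mem_coordBox [DecidableEq ι] :
    ∃ B D : ℕ, D ≠ 0 ∧ ∀ (n : ℕ), ∀ α ∈ coordBox b ((B * n : ℕ) : 𝓞 K) n,
      Ideal.absNorm (Ideal.span {α}) ∈ Set.Icc (n ^ Fintype.card ι) ((D * n) ^ Fintype.card ι) := by
  obtain ⟨B, hB⟩ := exists_house_le_mul_norm_equivFun b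
  refine ⟨B + 1, 2 * B + 1, by simp, fun n α hα => ?_⟩
  have hhouse : house (α - ((B + 1) * n : ℕ) : K) ≤ B * n := by
    have := (hB (α - ((B + 1) * n : ℕ))).trans
      (mul_le_mul_of_nonneg_left (mem_coordBox.mp hα) B.cast_nonneg)
    simpa using this
  have hmem := absNorm_span_mem_Icc_of_house_sub_le
    (by push_cast; linarith [n.cast_nonneg (α := ℝ)]) hhouse
  rw [← RingOfIntegers.rank, finrank_eq_card_basis b] at hmem
  have hlower : (((B + 1) * n : ℕ) - B * n : ℝ) = n := by push_cast; ring
  have hupper : (((B + 1) * n : ℕ) + B * n : ℝ) = ((2 * B + 1) * n : ℕ) := by push_cast; ring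
  rw [hlower, hupper] at hmem
  exact ⟨mod_cast hmem.1, mod_cast hmem.2⟩

end NormsInBoxes

section MertensFirst

open Finset Module NumberField

lemma exists_le_pow_le_two_pow_mul {x : ℝ} (hx : 1 ≤ x) {d : ℕ} (hd : d ≠ 0) :
    ∃ n : ℕ, x ≤ n ^ d ∧ (n : ℝ) ^ d ≤ 2 ^ d * x := by
  set y := x ^ (d : ℝ)⁻¹
  have hy : 1 ≤ y := Real.one_le_rpow hx (by positivity)
  have hyx : y ^ d = x := Real.rpow_inv_natCast_pow (by positivity) hd
  rw [← hyx, ← mul_pow]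
  exact ⟨⌈y⌉₊, by gcongr; exact Nat.le_ceil y,
    by gcongr; linarith [Nat.ceil_lt_add_one (zero_le_one.trans hy)]⟩

variable (K : Type*) [Field K] [NumberField K]

lemma exists_abs_sum_log_absNorm_div_sub_log_pow_le :
    ∃ (D : ℕ) (C : ℝ), D ≠ 0 ∧ ∀ n : ℕ, n ≠ 0 →
      |∑ P ∈ primeIdealsLE (𝓞 K) ((D * n) ^ finrank ℤ (𝓞 K)),
          Real.log (Ideal.absNorm P) / Ideal.absNorm P -
        Real.log ((n : ℝ) ^ finrank ℤ (𝓞 K))| ≤ C := by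
  classical
  set b := RingOfIntegers.basis K
  rw [finrank_eq_card_basis b]
  set d := Fintype.card (Free.ChooseBasisIndex ℤ (𝓞 K))
  obtain ⟨A, D, hD, hnorm⟩ := exists_absNorm_span_mem_Icc_of_mem_coordBox b
  obtain ⟨B, hB, hequi⟩ := exists_isEquidistributedModIdeals_coordBox b hD
  refine ⟨D, _, hD, fun n hn => (hequi ((A * n : ℕ) : 𝓞 K) n hn).abs_sum_log_absNorm_div_sub_le
    (e := Real.log ((D : ℝ) ^ d)) (by positivity) (Nat.cast_inv_le_one d) hB ?_ ?_ ?_ ?_⟩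
  · rw [← card_pos, card_coordBox]
    positivity
  · intro h0
    simpa [hn] using (hnorm n 0 h0).1
  · exact fun α hα => (hnorm n α hα).2
  · intro α hα
    obtain ⟨hlower, hupper⟩ := hnorm n α hα
    have hn_pos : (0 : ℝ) < n ^ d := by positivity
    have hlower : (n : ℝ) ^ d ≤ Ideal.absNorm (Ideal.span {α}) := mod_cast hlower
    have hupper : (Ideal.absNorm (Ideal.span {α}) : ℝ) ≤ D ^ d * n ^ d := by
      rw [← mul_pow]
      exact_mod_cast hupper
    rw [abs_of_nonneg (sub_nonneg.mpr (Real.log_le_log hn_pos hlower)), sub_le_iff_le_add,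
      ← Real.log_mul (by positivity) hn_pos.ne']
    exact Real.log_le_log (hn_pos.trans_le hlower) hupper

theorem exists_abs_sum_log_absNorm_div_sub_log_le :
    ∃ C : ℝ, ∀ x : ℝ, 1 ≤ x →
      |∑ P ∈ primeIdealsLE (𝓞 K) ⌊x⌋₊, Real.log (Ideal.absNorm P) / Ideal.absNorm P -
        Real.log x| ≤ C := by
  obtain ⟨D, C, hD, hC⟩ := exists_abs_sum_log_absNorm_div_sub_log_pow_le K
  set d := finrank ℤ (𝓞 K)
  have hd : d ≠ 0 := finrank_pos.ne'
  refine ⟨d * Real.log 4 * (D ^ d * 2 ^ d) + C + Real.log (2 ^ d), fun x hx => ?_⟩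
  obtain ⟨n, hxn, hnx⟩ := exists_le_pow_le_two_pow_mul hx hd
  have hx0 : 0 < x := one_pos.trans_le hx
  have hn : n ≠ 0 := by
    rintro rfl
    simp [hd] at hxn
    linarith
  set N := (D * n) ^ d
  have hN : ⌊x⌋₊ ≤ N := by
    refine Nat.floor_le_of_le (hxn.trans ?_)
    exact_mod_cast Nat.pow_le_pow_left (Nat.le_mul_of_pos_left n hD.bot_lt) d
  set F := fun N => ∑ P ∈ primeIdealsLE (𝓞 K) N, Real.log (Ideal.absNorm P) / Ideal.absNorm P
  have hmono : F ⌊x⌋₊ ≤ F N :=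
    sum_le_sum_of_subset_of_nonneg (primeIdealsLE_mono hN) fun _ _ _ => by positivity
  have htail : F N - F ⌊x⌋₊ ≤ d * Real.log 4 * (D ^ d * 2 ^ d) := by
    refine (sum_log_absNorm_div_sub_sum_le (𝓞 K) hx0 hN).trans ?_
    gcongr
    rw [div_le_iff₀ hx0, mul_assoc]
    push_cast [N, mul_pow]
    gcongr
  have hlog_le : Real.log x ≤ Real.log (n ^ d) := Real.log_le_log hx0 hxn
  have hle_log : Real.log (n ^ d) ≤ Real.log (2 ^ d) + Real.log x := by
    rw [← Real.log_mul (by positivity) hx0.ne']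
    exact Real.log_le_log (by positivity) hnx
  have := abs_le.mp (hC n hn)
  rw [abs_le]
  constructor <;> linarith

end MertensFirst

section LogLogSums

open Finset MeasureTheory

lemma exists_abs_sub_le_of_abs_sub_le {f g : ℝ → ℝ} {a : ℝ} (hg : Tendsto g atTop (𝓝 0))
    (h : ∀ x y, a < x → x ≤ y → |f y - f x| ≤ g x) : ∃ A, ∀ x, a < x → |f x - A| ≤ g x := by
  have hdist (x y : Set.Ioi a) (hxy : x ≤ y) : dist (f x) (f y) ≤ g x := by
    rw [dist_comm]
    exact h x y x.2 hxy
  obtain ⟨A, hA⟩ := cauchySeq_tendsto_of_complete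
    (cauchySeq_of_le_tendsto_0' (fun x : Set.Ioi a => g x) hdist
      (tendsto_comp_val_Ioi_atTop.mpr hg))
  exact ⟨A, fun x hx => le_of_tendsto (hA.const_sub (f x)).abs <|
    (eventually_ge_atTop ⟨x, hx⟩).mono fun y hxy => hdist ⟨x, hx⟩ y hxy⟩

lemma continuousOn_inv_div_log_sq {x y : ℝ} (hx : 1 < x) :
    ContinuousOn (fun t => t⁻¹ / Real.log t ^ 2) (Set.Icc x y) := by
  have hlog (t : ℝ) (ht : t ∈ Set.Icc x y) : Real.log t ^ 2 ≠ 0 :=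
    pow_ne_zero 2 (Real.log_pos (hx.trans_le ht.1)).ne'
  fun_prop (disch := grind)

lemma sum_Ioc_inv_log_mul_eq (a : ℕ → ℝ) {x y : ℝ} (hx : 1 < x) (hxy : x ≤ y) :
    ∑ k ∈ Ioc ⌊x⌋₊ ⌊y⌋₊, (Real.log k)⁻¹ * a k =
      (Real.log y)⁻¹ * ∑ k ∈ Icc 0 ⌊y⌋₊, a k - (Real.log x)⁻¹ * ∑ k ∈ Icc 0 ⌊x⌋₊, a k +
        ∫ t in x..y, t⁻¹ / Real.log t ^ 2 * ∑ k ∈ Icc 0 ⌊t⌋₊, a k := by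
  rw [sum_mul_eq_sub_sub_integral_mul a (f := fun t => (Real.log t)⁻¹) (by linarith) hxy,
    intervalIntegral.integral_of_le hxy]
  · simp only [Real.deriv_inv_log_apply, neg_div, neg_mul, integral_neg, sub_neg_eq_add]
  · exact fun t ht => Real.differentiableAt_inv_log (by grind) (by grind) (by grind)
  · simp only [Real.deriv_inv_log, neg_div]
    exact (continuousOn_inv_div_log_sq hx).neg.integrableOn_Icc

variable {a : ℕ → ℝ} {C : ℝ}

lemma abs_integral_sub_log_log_le (ha : ∀ x, 1 < x → |∑ k ∈ Icc 0 ⌊x⌋₊, a k - Real.log x| ≤ C)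
    {x y : ℝ} (hx : 1 < x) (hxy : x ≤ y) :
    |(∫ t in x..y, t⁻¹ / Real.log t ^ 2 * ∑ k ∈ Icc 0 ⌊t⌋₊, a k) -
      (Real.log (Real.log y) - Real.log (Real.log x))| ≤
        C * ((Real.log x)⁻¹ - (Real.log y)⁻¹) := by
  have hy := hx.trans_le hxy
  have hweight := continuousOn_inv_div_log_sq (y := y) hx
  have hint_sum : IntervalIntegrable
      (fun t => t⁻¹ / Real.log t ^ 2 * ∑ k ∈ Icc 0 ⌊t⌋₊, a k) volume x y :=
    (intervalIntegrable_iff_integrableOn_Icc_of_le hxy).mpr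
      (integrableOn_mul_sum_Icc a (by linarith) hweight.integrableOn_Icc)
  have hint_log : IntervalIntegrable (fun t => t⁻¹ / Real.log t) volume x y := by
    refine ContinuousOn.intervalIntegrable_of_Icc (μ := volume) hxy ?_
    fun_prop (disch := grind [Real.log_pos])
  rw [← integral_inv_div_log hx hy, ← integral_inv_div_log_sq hx hy,
    ← intervalIntegral.integral_sub hint_sum hint_log, ← intervalIntegral.integral_const_mul,
    ← Real.norm_eq_abs]
  refine intervalIntegral.norm_integral_le_of_norm_le hxy (ae_of_all _ fun t ht => ?_)
    ((hweight.intervalIntegrable_of_Icc (μ := volume) hxy).const_mul C)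
  have ht1 : 1 < t := hx.trans ht.1
  have hlog : 0 < Real.log t := Real.log_pos ht1
  have hfactor : t⁻¹ / Real.log t ^ 2 * ∑ k ∈ Icc 0 ⌊t⌋₊, a k - t⁻¹ / Real.log t =
      t⁻¹ / Real.log t ^ 2 * (∑ k ∈ Icc 0 ⌊t⌋₊, a k - Real.log t) := by
    field_simp
  rw [hfactor, Real.norm_eq_abs, abs_mul, abs_of_pos (by positivity), mul_comm]
  gcongr
  exact ha t ht1

lemma abs_sum_Ioc_inv_log_mul_sub_log_log_le
    (ha : ∀ x, 1 < x → |∑ k ∈ Icc 0 ⌊x⌋₊, a k - Real.log x| ≤ C) {x y : ℝ} (hx : 1 < x)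
    (hxy : x ≤ y) :
    |∑ k ∈ Ioc ⌊x⌋₊ ⌊y⌋₊, (Real.log k)⁻¹ * a k -
      (Real.log (Real.log y) - Real.log (Real.log x))| ≤ 2 * C / Real.log x := by
  have boundary {z : ℝ} (hz : 1 < z) :
      |(Real.log z)⁻¹ * ∑ k ∈ Icc 0 ⌊z⌋₊, a k - 1| ≤ C * (Real.log z)⁻¹ := by
    have hlog : 0 < Real.log z := Real.log_pos hz
    rw [← inv_mul_cancel₀ hlog.ne', ← mul_sub, abs_mul, abs_of_pos (by positivity), mul_comm]
    gcongr
    exact ha z hz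
  have hx' := abs_le.mp (boundary hx)
  have hy' := abs_le.mp (boundary (hx.trans_le hxy))
  have hint := abs_le.mp (abs_integral_sub_log_log_le ha hx hxy)
  rw [sum_Ioc_inv_log_mul_eq a hx hxy, abs_le, div_eq_mul_inv]
  constructor <;> linarith

theorem exists_abs_sum_inv_log_mul_sub_log_log_le
    (ha : ∀ x, 1 < x → |∑ k ∈ Icc 0 ⌊x⌋₊, a k - Real.log x| ≤ C) :
    ∃ A, ∀ x, 1 < x → |∑ k ∈ Icc 0 ⌊x⌋₊, (Real.log k)⁻¹ * a k - (Real.log (Real.log x) + A)| ≤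
      2 * C / Real.log x := by
  obtain ⟨A, hA⟩ := exists_abs_sub_le_of_abs_sub_le (a := 1)
    (f := fun x => ∑ k ∈ Icc 0 ⌊x⌋₊, (Real.log k)⁻¹ * a k - Real.log (Real.log x))
    (Real.tendsto_log_atTop.const_div_atTop (2 * C)) fun x y hx hxy => by
      have hsplit := sum_Ioc_consecutive (fun k : ℕ => (Real.log k)⁻¹ * a k)
        (Nat.zero_le ⌊x⌋₊) (Nat.floor_le_floor hxy)
      rw [sub_sub_sub_comm, ← add_sum_Ioc_eq_sum_Icc (Nat.zero_le _),
        ← add_sum_Ioc_eq_sum_Icc (Nat.zero_le ⌊x⌋₊), ← hsplit, add_sub_add_left_eq_sub,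
        add_sub_cancel_left]
      exact abs_sum_Ioc_inv_log_mul_sub_log_log_le ha hx hxy
  exact ⟨A, fun x hx => by simpa only [sub_sub] using hA x hx⟩

end LogLogSums

section Reciprocals

open Finset Module

variable {R : Type*} [CommRing R] [IsDedekindDomain R] [Free ℤ R] [Module.Finite ℤ R] [CharZero R]

lemma tsum_one_div_absNorm_eq_sum_primeIdealsLE {x : ℝ} (hx : 0 ≤ x) :
    ∑' P : {P : Ideal R // P.IsPrime ∧ (Ideal.absNorm P : ℝ) ≤ x}, 1 / (Ideal.absNorm P.1 : ℝ) =
      ∑ P ∈ primeIdealsLE R ⌊x⌋₊, 1 / (Ideal.absNorm P : ℝ) := by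
  classical
  have hsub : ∀ P ∈ primeIdealsLE R ⌊x⌋₊, P.IsPrime ∧ (Ideal.absNorm P : ℝ) ≤ x := fun P hP =>
    have ⟨hprime, _, hle⟩ := mem_primeIdealsLE.mp hP
    ⟨hprime, (Nat.le_floor_iff hx).mp hle⟩
  rw [tsum_eq_sum (s := (primeIdealsLE R ⌊x⌋₊).subtype _)]
  · exact sum_subtype_of_mem (fun P : Ideal R => 1 / (Ideal.absNorm P : ℝ)) hsub
  -- The zero ideal is the only other index, and it contributes `1 / 0 = 0`.
  · rintro ⟨P, hprime, hle⟩ hP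
    have hbot : P = ⊥ := by
      by_contra hbot
      exact hP (mem_subtype.mpr (mem_primeIdealsLE.mpr ⟨hprime, hbot, Nat.le_floor hle⟩))
    simp [hbot]

lemma sum_one_div_absNorm_eq_sum_primeIdealCount (N : ℕ) :
    ∑ P ∈ primeIdealsLE R N, 1 / (Ideal.absNorm P : ℝ) =
      ∑ k ∈ Icc 0 N, (Real.log k)⁻¹ * (primeIdealCount R k * (Real.log k / k)) := by
  simp only [mul_left_comm _ (primeIdealCount R _ : ℝ)]
  rw [← sum_primeIdealsLE R zero_le_two fun k => (Real.log k)⁻¹ * (Real.log k / k)]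
  refine sum_congr rfl fun P hP => ?_
  have hlog : 0 < Real.log (Ideal.absNorm P) :=
    Real.log_pos (mod_cast two_le_absNorm_of_mem_primeIdealsLE hP)
  field_simp

end Reciprocals

theorem mertens_numberField_general (K : Type*) [Field K] [NumberField K] :
    ∃ A C : ℝ, ∀ x : ℝ, 1 < x →
      |(∑' p : {p : Ideal (NumberField.RingOfIntegers K) //
          p.IsPrime ∧ (Ideal.absNorm p : ℝ) ≤ x},
        1 / (Ideal.absNorm p.1 : ℝ)) - (Real.log (Real.log x) + A)| ≤ C / Real.log x := by
  obtain ⟨C, hC⟩ := exists_abs_sum_log_absNorm_div_sub_log_le K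
  obtain ⟨A, hA⟩ := exists_abs_sum_inv_log_mul_sub_log_log_le
    (a := fun k => primeIdealCount (NumberField.RingOfIntegers K) k * (Real.log k / k))
    fun x hx => by
      rw [← sum_primeIdealsLE _ zero_le_two fun k => Real.log k / k]
      exact hC x hx.le
  refine ⟨A, 2 * C, fun x hx => ?_⟩
  rw [tsum_one_div_absNorm_eq_sum_primeIdealsLE (zero_le_one.trans hx.le),
    sum_one_div_absNorm_eq_sum_primeIdealCount]
  exact hA x hx

/-- **Mertens' theorem for number fields**: there is a constant `A = A(K)` with
`Σ_{N(p) ≤ x} 1/N(p) = log log x + A + O(1/log x)`. -/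
theorem mertens_numberField
    (K : Type) [Field K] [NumberField K] :
    ∃ A C : ℝ, ∀ x : ℝ, 3 ≤ x →
      |(∑' p : {p : Ideal (NumberField.RingOfIntegers K) //
          p.IsPrime ∧ (Ideal.absNorm p : ℝ) ≤ x},
        1 / (Ideal.absNorm p.1 : ℝ)) - (Real.log (Real.log x) + A)| ≤ C / Real.log x := by
  obtain ⟨A, C, h⟩ := mertens_numberField_general K
  exact ⟨A, C, fun x hx => h x (by linarith)⟩

end
end

section
/- Let h ≥ 2 be an integer. There exists a constant τ = τ(h, K) with τ < 1 such that for every u ∈ ℕ and all distinct prime ideals p_1, …, p_u of O_K, the number of h-free ideals m of O_K with N(m) ≤ x and p_i | m for all i = 1, …, u equals (∏_{i=1}^u (N(p_i)^{h−1} − 1)/(N(p_i)^h − 1)) · (κ/ζ_K(h)) · x + O_{h,u}(x^τ / ∏_{i=1}^u N(p_i)^τ), where the implied constant depends only on h, u, and K. -/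
/-!
The number of nonzero ideals of norm at most `x` is `κ x + O(x ^ θ)` with `θ < 1`. In each ideal
class this amounts to counting lattice points in a fundamental cone for the unit group, and in
logarithmic coordinates that cone cut off at norm `exp (n s)` is a box, unbounded only in the norm
direction. Adding a bounded vector to a point of norm at least `exp (n σ)` moves its logarithmic
coordinates by `O(exp (-σ))`, so translates of a fundamental domain of the lattice pack and cover
the box up to enlarging or shrinking it by that amount; `σ = n s / (n + 1)` balances the errors.

For prescribed divisors, dividing by `∏ pᵢ` turns the `h`-free ideals divisible by every `pᵢ` into
ideals that are `(h - 1)`-free at the `pᵢ` and `h`-free elsewhere. Sieving by inclusion–exclusion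
over finite sets `T` of primes, with `∏ 𝔭 ∈ T, 𝔭 ^ e 𝔭 ∣ I`, replaces `κ` by an Euler product, and
the error terms add up to a convergent product because `h θ > 1`.
-/

open Filter Topology
open scoped BigOperators

noncomputable section

variable (K : Type) [Field K] [NumberField K]

/-- `m` is an `h`-free ideal: no prime ideal divides `m` to order `h` or more. -/
def IsHFree (h : ℕ) (m : Ideal (NumberField.RingOfIntegers K)) : Prop :=
  m ≠ 0 ∧ ∀ p : Ideal (NumberField.RingOfIntegers K), p.IsPrime → ¬ p ^ h ∣ m

/-- The residue `κ` of the Dedekind zeta function of `K` at `s = 1`. -/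
def kappa : ℝ :=
  (2 ^ NumberField.InfinitePlace.nrRealPlaces K *
      (2 * Real.pi) ^ NumberField.InfinitePlace.nrComplexPlaces K *
      (NumberField.classNumber K) * NumberField.Units.regulator K) /
    ((NumberField.Units.torsionOrder K) * Real.sqrt |(NumberField.discr K : ℝ)|)

/-- The Dedekind zeta function of `K` at a real argument, as a sum over nonzero ideals. -/
def zetaKR (s : ℝ) : ℝ :=
  ∑' m : {m : Ideal (NumberField.RingOfIntegers K) // m ≠ 0},
    ((Ideal.absNorm m.1 : ℝ)) ^ (-s)

open Ideal IsDedekindDomain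
open scoped nonZeroDivisors

theorem hasSum_indicator_one {α : Type*} {s : Set α} (hs : s.Finite) :
    HasSum (s.indicator fun _ ↦ (1 : ℝ)) (Nat.card s) := by
  have h : HasSum (s.indicator fun _ ↦ (1 : ℝ)) (∑ a ∈ hs.toFinset, s.indicator (fun _ ↦ 1) a) :=
    hasSum_sum_of_ne_finset_zero fun a ha ↦ Set.indicator_of_notMem (by simpa using ha) _
  rwa [Finset.sum_congr rfl fun a ha ↦ Set.indicator_of_mem (hs.mem_toFinset.mp ha) _,
    Finset.sum_const, nsmul_one, ← Nat.card_eq_card_finite_toFinset hs] at h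

theorem hasProd_piecewise {ι α : Type*} [DecidableEq ι] [Field α] [TopologicalSpace α]
    [ContinuousMul α] {f g : ι → α} {a : α} (hf : HasProd f a) (S : Finset ι)
    (hS : ∀ i ∈ S, f i ≠ 0) :
    HasProd (S.piecewise g f) (a * ∏ i ∈ S, g i / f i) := by
  have h : HasProd (S.piecewise (g / f) 1) (∏ i ∈ S, S.piecewise (g / f) 1 i) :=
    hasProd_prod_of_ne_finset_one fun i hi ↦ by simp [hi]
  rw [Finset.prod_congr rfl fun i hi ↦ S.piecewise_eq_of_mem (g / f) 1 hi] at h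
  refine (hf.mul h).congr_fun fun i ↦ ?_
  by_cases hi : i ∈ S
  · simp [hi, mul_div_cancel₀, hS i hi]
  · simp [hi]

theorem summable_rpow_neg_of_card_le {α : Type*} {N : α → ℝ} (hN : ∀ a, 1 ≤ N a)
    (hfin : ∀ x, {a | N a ≤ x}.Finite) {C : ℝ}
    (hC : ∀ x, 1 ≤ x → (Nat.card {a | N a ≤ x} : ℝ) ≤ C * x) {s : ℝ} (hs : 1 < s) :
    Summable fun a ↦ N a ^ (-s) := by
  obtain ⟨q, hq⟩ : ∃ q : ℝ, q = 2 ^ (-s) := ⟨_, rfl⟩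
  have hq0 : 0 < q := by rw [hq]; positivity
  obtain ⟨f, hf⟩ : ∃ f : ℕ × α → ℝ,
      ∀ k a, f (k, a) = {a | N a ≤ 2 ^ k}.indicator (fun _ ↦ (1 : ℝ)) a * q ^ k :=
    ⟨fun k ↦ {a | N a ≤ 2 ^ k.1}.indicator (fun _ ↦ (1 : ℝ)) k.2 * q ^ k.1, fun _ _ ↦ rfl⟩
  have hf0 (k) : 0 ≤ f k := by
    rw [hf]
    exact mul_nonneg (Set.indicator_nonneg (by simp) _) (by positivity)
  have hfib (k : ℕ) : HasSum (fun a ↦ f (k, a)) (Nat.card {a | N a ≤ 2 ^ k} * q ^ k) := by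
    simpa only [hf] using (hasSum_indicator_one (hfin _)).mul_right _
  have hfs : Summable f := by
    rw [summable_prod_of_nonneg hf0]
    refine ⟨fun k ↦ (hfib k).summable, ?_⟩
    have hgeom : Summable fun k : ℕ ↦ C * (2 * q) ^ k := by
      refine (summable_geometric_of_lt_one (by positivity) ?_).mul_left C
      calc 2 * q = 2 ^ (1 - s) := by rw [hq, sub_eq_add_neg, Real.rpow_add two_pos, Real.rpow_one]
        _ < 1 := Real.rpow_lt_one_of_one_lt_of_neg one_lt_two (by linarith)
    refine hgeom.of_nonneg_of_le (fun k ↦ tsum_nonneg fun a ↦ hf0 _) fun k ↦ ?_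
    rw [(hfib k).tsum_eq, mul_pow, ← mul_assoc]
    gcongr
    exact hC _ (one_le_pow₀ one_le_two)
  refine (hfs.prod_symm.prod.mul_left (2 ^ s)).of_nonneg_of_le
    (fun a ↦ Real.rpow_nonneg (zero_le_one.trans (hN a)) _) fun a ↦ ?_
  obtain ⟨k, hk⟩ := exists_nat_pow_near (hN a) one_lt_two
  have hterm : q ^ (k + 1) = f (k + 1, a) := by simp [hf, hk.2.le]
  calc N a ^ (-s) ≤ (2 ^ k) ^ (-s) :=
        Real.rpow_le_rpow_of_nonpos (by positivity) hk.1 (by linarith)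
    _ = 2 ^ s * q ^ (k + 1) := by
        rw [pow_succ', hq, ← mul_assoc, ← Real.rpow_add two_pos, add_neg_cancel, Real.rpow_zero,
          one_mul, ← Real.rpow_pow_comm two_pos.le]
    _ ≤ _ := by
        rw [hterm]
        gcongr
        exact (hfs.prod_symm.prod_factor a).le_tsum (k + 1) fun _ _ ↦ hf0 _

theorem hasSum_neg_one_pow_card_mul_prod {ι R : Type*} [NormedCommRing R] [NormOneClass R]
    [CompleteSpace R] {f : ι → R} (hf : Summable fun i ↦ ‖f i‖) :
    HasSum (fun T : Finset ι ↦ (-1) ^ T.card * ∏ i ∈ T, f i) (∏' i, (1 - f i)) := by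
  have h := summable_finsetProd_of_summable_norm (f := fun i ↦ -f i) (by simpa using hf)
  simpa only [sub_eq_add_neg, tprod_one_add h, Finset.prod_neg] using h.hasSum

section PowFree

variable {R : Type*} [CommRing R] [IsDedekindDomain R]

/-- An ideal is `e`-free, for an exponent function `e` on the nonzero primes, if no `𝔭 ^ e 𝔭`
divides it. -/
def IsPowFree (e : HeightOneSpectrum R → ℕ) (I : Ideal R) : Prop :=
  ∀ p : HeightOneSpectrum R, ¬p.asIdeal ^ e p ∣ I

/-- The ideal `∏ 𝔭 ∈ T, 𝔭 ^ e 𝔭`. -/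
def primePowProd (e : HeightOneSpectrum R → ℕ) (T : Finset (HeightOneSpectrum R)) : (Ideal R)⁰ :=
  ⟨∏ p ∈ T, p.asIdeal ^ e p, mem_nonZeroDivisors_of_ne_zero <|
    Finset.prod_ne_zero_iff.mpr fun p _ ↦ pow_ne_zero _ p.ne_bot⟩

theorem isCoprime_asIdeal {p q : HeightOneSpectrum R} (h : p ≠ q) :
    IsCoprime p.asIdeal q.asIdeal :=
  Ideal.isCoprime_of_isMaximal fun hpq ↦ h (HeightOneSpectrum.ext hpq)

theorem primePowProd_dvd_iff {e : HeightOneSpectrum R → ℕ} {T : Finset (HeightOneSpectrum R)}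
    {I : Ideal R} : (primePowProd e T).1 ∣ I ↔ ∀ p ∈ T, p.asIdeal ^ e p ∣ I :=
  ⟨fun h _ hp ↦ (Finset.dvd_prod_of_mem (fun p ↦ p.asIdeal ^ e p) hp).trans h,
    Finset.prod_dvd_of_coprime fun _ _ _ _ hpq ↦ (isCoprime_asIdeal hpq).pow⟩

theorem finite_setOf_asIdeal_pow_dvd {e : HeightOneSpectrum R → ℕ} (he : ∀ p, e p ≠ 0)
    (I : (Ideal R)⁰) : {p : HeightOneSpectrum R | p.asIdeal ^ e p ∣ I.1}.Finite :=
  (Ideal.finite_factors (nonZeroDivisors.ne_zero I.2)).subset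
    fun p hp ↦ (dvd_pow_self _ (he p)).trans hp

open scoped Classical in
theorem hasSum_neg_one_pow_card {e : HeightOneSpectrum R → ℕ} (he : ∀ p, e p ≠ 0)
    (I : (Ideal R)⁰) :
    HasSum ({T | (primePowProd e T).1 ∣ I.1}.indicator fun T ↦ (-1 : ℝ) ^ T.card)
      (if IsPowFree e I.1 then 1 else 0) := by
  set D := (finite_setOf_asIdeal_pow_dvd he I).toFinset with hD
  have hdvd : {T | (primePowProd e T).1 ∣ I.1} = D.powerset := by
    ext T
    simp [primePowProd_dvd_iff, Set.subset_def, hD]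
  have hfree : IsPowFree e I.1 ↔ D = ∅ := by
    simp [IsPowFree, hD, Set.eq_empty_iff_forall_notMem]
  have hsum : ∑ T ∈ D.powerset, (-1 : ℝ) ^ T.card = if IsPowFree e I.1 then 1 else 0 := by
    simp only [hfree]
    exact_mod_cast Finset.sum_powerset_neg_one_pow_card
  rw [hdvd, ← hsum]
  exact hasSum_subtype_iff_indicator.mp (D.powerset.hasSum fun T ↦ (-1 : ℝ) ^ T.card)

theorem injective_mul_left_nonZeroDivisors (a : (Ideal R)⁰) : Function.Injective (a * ·) :=
  fun _ _ h ↦ Subtype.ext (mul_left_cancel₀ (nonZeroDivisors.ne_zero a.2) (congrArg Subtype.val h))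

theorem range_mul_left_nonZeroDivisors (a : (Ideal R)⁰) :
    Set.range (a * ·) = {I : (Ideal R)⁰ | a.1 ∣ I.1} := by
  ext I
  refine ⟨fun ⟨J, hJ⟩ ↦ ⟨J.1, congrArg Subtype.val hJ.symm⟩, fun ⟨J, hJ⟩ ↦ ?_⟩
  refine ⟨⟨J, mem_nonZeroDivisors_of_ne_zero fun h ↦ nonZeroDivisors.ne_zero I.2 ?_⟩,
    Subtype.ext hJ.symm⟩
  rw [hJ, h, mul_zero]

theorem tsum_indicator_dvd (a : (Ideal R)⁰) (w : (Ideal R)⁰ → ℝ) :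
    ∑' I, {I : (Ideal R)⁰ | a.1 ∣ I.1}.indicator w I = ∑' J, w (a * J) := by
  rw [← range_mul_left_nonZeroDivisors, ← tsum_subtype,
    tsum_range w (injective_mul_left_nonZeroDivisors a)]

theorem tsum_indicator_isPowFree {e : HeightOneSpectrum R → ℕ} (he : ∀ p, e p ≠ 0)
    {w : (Ideal R)⁰ → ℝ} (hw0 : ∀ I, 0 ≤ w I) (hw : Summable w)
    (hT : Summable fun T ↦ ∑' J, w (primePowProd e T * J)) :
    ∑' I, {I : (Ideal R)⁰ | IsPowFree e I.1}.indicator w I =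
      ∑' T : Finset (HeightOneSpectrum R), (-1) ^ T.card * ∑' J, w (primePowProd e T * J) := by
  classical
  let f (T : Finset (HeightOneSpectrum R)) : (Ideal R)⁰ → ℝ :=
    {I : (Ideal R)⁰ | (primePowProd e T).1 ∣ I.1}.indicator w
  have hf0 (T) (I) : 0 ≤ f T I := Set.indicator_nonneg (fun I _ ↦ hw0 I) I
  have hf : Summable (Function.uncurry f) :=
    (summable_prod_of_nonneg fun TI ↦ hf0 TI.1 TI.2).mpr
      ⟨fun T ↦ hw.indicator _, hT.congr fun T ↦ (tsum_indicator_dvd _ w).symm⟩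
  have hswap : Summable (Function.uncurry fun T I ↦ (-1) ^ T.card * f T I) :=
    hf.of_norm_bounded fun ⟨T, I⟩ ↦ by simp [abs_of_nonneg (hf0 T I)]
  calc ∑' I, {I : (Ideal R)⁰ | IsPowFree e I.1}.indicator w I
      = ∑' I, ∑' T, (-1) ^ T.card * f T I := by
        refine tsum_congr fun I ↦ ?_
        have h := (hasSum_neg_one_pow_card he I).mul_right (w I)
        simpa [f, Set.indicator_apply] using h.tsum_eq.symm
    _ = ∑' T, ∑' I, (-1) ^ T.card * f T I := hswap.tsum_comm
    _ = _ := by simp only [tsum_mul_left, f, tsum_indicator_dvd]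

end PowFree

section IdealNorm

variable {R : Type*} [CommRing R] [IsDedekindDomain R]

theorem isPowFree_one_iff {I : (Ideal R)⁰} : IsPowFree (fun _ ↦ 1) I.1 ↔ I = 1 := by
  refine ⟨fun hI ↦ Subtype.ext ?_, ?_⟩
  · by_contra h
    obtain ⟨P, hP, hPI⟩ := exists_le_maximal I.1 (by simpa using h)
    refine hI ⟨P, hP.isPrime, ?_⟩ (by simpa using dvd_iff_le.mpr hPI)
    exact fun h ↦ nonZeroDivisors.ne_zero I.2 (by simpa [h] using hPI)
  · rintro rfl p hp
    exact p.prime.not_isUnit (isUnit_of_dvd_one (by simpa using hp))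

variable [Module.Free ℤ R]

theorem absNorm_primePowProd_rpow (e : HeightOneSpectrum R → ℕ)
    (T : Finset (HeightOneSpectrum R)) (s : ℝ) :
    (absNorm (primePowProd e T).1 : ℝ) ^ (-s) =
      ∏ p ∈ T, (absNorm p.asIdeal : ℝ) ^ (-(e p * s)) := by
  simp only [primePowProd, map_prod, map_pow, Nat.cast_prod, Nat.cast_pow]
  rw [← Real.finsetProd_rpow _ _ fun _ _ ↦ by positivity]
  refine Finset.prod_congr rfl fun p _ ↦ ?_
  rw [← Real.rpow_natCast, ← Real.rpow_mul (Nat.cast_nonneg _), mul_neg]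

theorem summable_absNorm_asIdeal_rpow {s : ℝ}
    (hs : Summable fun I : (Ideal R)⁰ ↦ (absNorm I.1 : ℝ) ^ (-s)) :
    Summable fun p : HeightOneSpectrum R ↦ (absNorm p.asIdeal : ℝ) ^ (-s) := by
  have hinj : Function.Injective fun p : HeightOneSpectrum R ↦
      (⟨p.asIdeal, mem_nonZeroDivisors_of_ne_zero p.ne_bot⟩ : (Ideal R)⁰) :=
    fun _ _ h ↦ HeightOneSpectrum.ext (congrArg Subtype.val h)
  exact (hs.comp_injective hinj :)

/-- Sieving the weight `N I ^ (-s)` by all primes leaves only the unit ideal. -/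
theorem hasProd_one_sub_absNorm_rpow {s : ℝ}
    (hs : Summable fun I : (Ideal R)⁰ ↦ (absNorm I.1 : ℝ) ^ (-s)) :
    HasProd (fun p : HeightOneSpectrum R ↦ 1 - (absNorm p.asIdeal : ℝ) ^ (-s))
      (∑' I : (Ideal R)⁰, (absNorm I.1 : ℝ) ^ (-s))⁻¹ := by
  set ζ := ∑' I : (Ideal R)⁰, (absNorm I.1 : ℝ) ^ (-s)
  have hprime := summable_absNorm_asIdeal_rpow hs
  have hmul (T : Finset (HeightOneSpectrum R)) :
      ∑' J, (absNorm (primePowProd (fun _ ↦ 1) T * J).1 : ℝ) ^ (-s) =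
        (∏ p ∈ T, (absNorm p.asIdeal : ℝ) ^ (-s)) * ζ := by
    have hT := absNorm_primePowProd_rpow (R := R) (fun _ ↦ 1) T s
    simp only [Nat.cast_one, one_mul] at hT
    simp only [Submonoid.coe_mul, map_mul, Nat.cast_mul, ← hT, ζ, ← tsum_mul_left,
      Real.mul_rpow (Nat.cast_nonneg _) (Nat.cast_nonneg _)]
  have hsum : Summable fun T : Finset (HeightOneSpectrum R) ↦
      (∏ p ∈ T, (absNorm p.asIdeal : ℝ) ^ (-s)) * ζ :=
    (summable_finsetProd_of_summable_nonneg (fun p ↦ by positivity) hprime).mul_right ζ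
  have hsieve := tsum_indicator_isPowFree (e := fun _ ↦ 1) (fun _ ↦ one_ne_zero)
    (fun I ↦ Real.rpow_nonneg (Nat.cast_nonneg (absNorm I.1)) (-s)) hs
    (hsum.congr fun T ↦ (hmul T).symm)
  have hprod := hasSum_neg_one_pow_card_mul_prod hprime.norm
  simp only [hmul, ← mul_assoc, tsum_mul_right, hprod.tsum_eq, isPowFree_one_iff] at hsieve
  have hone : (∏' p : HeightOneSpectrum R, (1 - (absNorm p.asIdeal : ℝ) ^ (-s))) * ζ = 1 := by
    rw [← hsieve, Set.ofPred_eq_eq_singleton,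
      tsum_eq_single 1 fun I hI ↦ Set.indicator_of_notMem (by simpa using hI) _]
    simp
  rw [← eq_inv_of_mul_eq_one_left hone]
  simpa only [sub_eq_add_neg] using
    (multipliable_one_add_of_summable (by simpa using hprime.norm)).hasProd

variable [Module.Finite ℤ R]

theorem one_le_absNorm (I : (Ideal R)⁰) : (1 : ℝ) ≤ absNorm I.1 :=
  mod_cast Nat.one_le_iff_ne_zero.mpr (absNorm_ne_zero_iff_mem_nonZeroDivisors.mpr I.2)

theorem absNorm_pos (I : (Ideal R)⁰) : (0 : ℝ) < absNorm I.1 :=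
  zero_lt_one.trans_le (one_le_absNorm I)

theorem one_lt_absNorm_asIdeal (p : HeightOneSpectrum R) : (1 : ℝ) < absNorm p.asIdeal :=
  mod_cast Nat.lt_of_le_of_ne (Nat.one_le_iff_ne_zero.mpr (mt absNorm_eq_zero_iff.mp p.ne_bot))
    (Ne.symm (mt absNorm_eq_one_iff.mp p.isPrime.ne_top))

variable (R) in
/-- The number of nonzero ideals of norm at most `x`. -/
def idealCount (x : ℝ) : ℕ :=
  Nat.card {I : (Ideal R)⁰ | (absNorm I.1 : ℝ) ≤ x}

theorem abs_idealCount_div_primePowProd_sub_le {κ M θ : ℝ}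
    (hcount : ∀ x, 0 < x → |idealCount R x - κ * x| ≤ M * x ^ θ) (e : HeightOneSpectrum R → ℕ)
    (T : Finset (HeightOneSpectrum R)) {x : ℝ} (hx : 0 < x) :
    |idealCount R (x / absNorm (primePowProd e T).1) -
        κ * (∏ p ∈ T, (absNorm p.asIdeal : ℝ) ^ (-(e p : ℝ))) * x| ≤
      M * (∏ p ∈ T, (absNorm p.asIdeal : ℝ) ^ (-(e p * θ))) * x ^ θ := by
  have hN := absNorm_pos (primePowProd e T)
  have hmain : ∏ p ∈ T, (absNorm p.asIdeal : ℝ) ^ (-(e p : ℝ)) =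
      (absNorm (primePowProd e T).1 : ℝ)⁻¹ := by
    rw [← Real.rpow_neg_one, absNorm_primePowProd_rpow]
    simp only [mul_one]
  have herr : M * (x / absNorm (primePowProd e T).1) ^ θ =
      M * (∏ p ∈ T, (absNorm p.asIdeal : ℝ) ^ (-(e p * θ))) * x ^ θ := by
    rw [← absNorm_primePowProd_rpow, Real.div_rpow hx.le hN.le, Real.rpow_neg hN.le]
    ring
  rw [← herr, hmain, mul_assoc, mul_comm _ x, ← div_eq_mul_inv]
  exact hcount _ (div_pos hx hN)

variable [CharZero R]

theorem finite_setOf_absNorm_le (x : ℝ) :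
    {I : (Ideal R)⁰ | (absNorm I.1 : ℝ) ≤ x}.Finite :=
  Set.Finite.subset (finite_setOfPred_absNorm_le₀ ⌊x⌋₊) fun _ hI ↦ Nat.le_floor hI

theorem hasSum_indicator_absNorm_mul_le (a : (Ideal R)⁰) (x : ℝ) :
    HasSum (fun J ↦ {I : (Ideal R)⁰ | (absNorm I.1 : ℝ) ≤ x}.indicator (fun _ ↦ (1 : ℝ)) (a * J))
      (idealCount R (x / absNorm a.1)) := by
  have hmul (J : (Ideal R)⁰) :
      (absNorm J.1 : ℝ) ≤ x / absNorm a.1 ↔ (absNorm (a * J).1 : ℝ) ≤ x := by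
    rw [le_div_iff₀' (absNorm_pos a)]
    simp
  convert! hasSum_indicator_one (finite_setOf_absNorm_le (R := R) (x / absNorm a.1)) using 2 with J
  exact Set.indicator_eq_indicator (hmul J).symm rfl

theorem summable_absNorm_rpow {C : ℝ} (hC : ∀ x, 1 ≤ x → (idealCount R x : ℝ) ≤ C * x) {s : ℝ}
    (hs : 1 < s) : Summable fun I : (Ideal R)⁰ ↦ (absNorm I.1 : ℝ) ^ (-s) :=
  summable_rpow_neg_of_card_le one_le_absNorm finite_setOf_absNorm_le hC hs

theorem card_isPowFree_eq_tsum {e : HeightOneSpectrum R → ℕ} (he : ∀ p, e p ≠ 0) {x : ℝ}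
    (hx : Summable fun T ↦ (idealCount R (x / absNorm (primePowProd e T).1) : ℝ)) :
    (Nat.card {I : (Ideal R)⁰ | IsPowFree e I.1 ∧ (absNorm I.1 : ℝ) ≤ x} : ℝ) =
      ∑' T : Finset (HeightOneSpectrum R),
        (-1) ^ T.card * (idealCount R (x / absNorm (primePowProd e T).1) : ℝ) := by
  have hcount T := (hasSum_indicator_absNorm_mul_le (primePowProd e T) x).tsum_eq
  have hfin := finite_setOf_absNorm_le (R := R) x
  have h := tsum_indicator_isPowFree he
    (w := {I : (Ideal R)⁰ | (absNorm I.1 : ℝ) ≤ x}.indicator fun _ ↦ 1)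
    (Set.indicator_nonneg fun _ _ ↦ zero_le_one) (hasSum_indicator_one hfin).summable
    (by simpa only [hcount] using hx)
  simp only [hcount, Set.indicator_indicator] at h
  rw [← h]
  exact (hasSum_indicator_one (hfin.subset fun I hI ↦ hI.2)).tsum_eq.symm

theorem abs_card_isPowFree_sub_le {κ M θ : ℝ} (hθ1 : θ ≤ 1)
    (hcount : ∀ x, 0 < x → |idealCount R x - κ * x| ≤ M * x ^ θ)
    {e : HeightOneSpectrum R → ℕ} (he : ∀ p, e p ≠ 0)
    (hθ : Summable fun p : HeightOneSpectrum R ↦ (absNorm p.asIdeal : ℝ) ^ (-(e p * θ)))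
    {x : ℝ} (hx : 0 < x) :
    |(Nat.card {I : (Ideal R)⁰ | IsPowFree e I.1 ∧ (absNorm I.1 : ℝ) ≤ x} : ℝ) -
        κ * (∏' p : HeightOneSpectrum R, (1 - (absNorm p.asIdeal : ℝ) ^ (-(e p : ℝ)))) * x| ≤
      M * (∏' p : HeightOneSpectrum R, (1 + (absNorm p.asIdeal : ℝ) ^ (-(e p * θ)))) * x ^ θ := by
  have hone : Summable fun p : HeightOneSpectrum R ↦ (absNorm p.asIdeal : ℝ) ^ (-(e p : ℝ)) :=
    hθ.of_nonneg_of_le (fun p ↦ by positivity) fun p ↦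
      Real.rpow_le_rpow_of_exponent_le (one_lt_absNorm_asIdeal p).le <| neg_le_neg <|
        mul_le_of_le_one_right (Nat.cast_nonneg _) hθ1
  have hmain := ((hasSum_neg_one_pow_card_mul_prod hone.norm).mul_left κ).mul_right x
  have herr : HasSum (fun T ↦ M * (∏ p ∈ T, (absNorm p.asIdeal : ℝ) ^ (-(e p * θ))) * x ^ θ)
      (M * (∏' p : HeightOneSpectrum R, (1 + (absNorm p.asIdeal : ℝ) ^ (-(e p * θ)))) * x ^ θ) := by
    have h := summable_finsetProd_of_summable_norm hθ.norm
    exact tprod_one_add h ▸ (h.hasSum.mul_left M).mul_right _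
  have hbound T := abs_idealCount_div_primePowProd_sub_le hcount e T hx
  have hc : Summable fun T ↦ (idealCount R (x / absNorm (primePowProd e T).1) : ℝ) := by
    have h := ((summable_finsetProd_of_summable_norm hone.norm).mul_left κ).mul_right x
    refine ((Summable.of_norm_bounded herr.summable hbound).add h).congr fun T ↦ ?_
    exact sub_add_cancel _ _
  have hsigned : Summable fun T ↦
      (-1) ^ T.card * (idealCount R (x / absNorm (primePowProd e T).1) : ℝ) :=
    Summable.of_norm (by simpa using hc.norm)
  rw [card_isPowFree_eq_tsum he hc, ← hmain.tsum_eq, ← hsigned.tsum_sub hmain.summable,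
    ← Real.norm_eq_abs]
  refine tsum_of_norm_bounded herr fun T ↦ (Eq.trans_le ?_ (hbound T))
  rw [mul_left_comm, mul_assoc, ← mul_sub, norm_mul, norm_pow, norm_neg,
    norm_one, one_pow, one_mul, Real.norm_eq_abs]

end IdealNorm

section PrescribedDivisors

variable {R : Type*} [CommRing R] [IsDedekindDomain R]

open scoped Classical in
theorem asIdeal_pow_dvd_primePowProd_one_mul_iff {S : Finset (HeightOneSpectrum R)}
    {p : HeightOneSpectrum R} {k : ℕ} (hk : k ≠ 0) (I : Ideal R) :
    p.asIdeal ^ k ∣ (primePowProd (fun _ ↦ 1) S).1 * I ↔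
      p.asIdeal ^ (if p ∈ S then k - 1 else k) ∣ I := by
  have hcop (T : Finset (HeightOneSpectrum R)) (hp : p ∉ T) (j : ℕ) :
      p.asIdeal ^ j ∣ (∏ q ∈ T, q.asIdeal) * I ↔ p.asIdeal ^ j ∣ I :=
    have hprod : IsCoprime (p.asIdeal ^ j) (∏ q ∈ T, q.asIdeal) :=
      IsCoprime.prod_right fun q hq ↦
        (isCoprime_asIdeal (ne_of_mem_of_not_mem hq hp).symm).pow_left
    ⟨hprod.dvd_of_dvd_mul_left, (Dvd.dvd.mul_left · _)⟩
  simp only [primePowProd, pow_one]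
  split_ifs with hp
  · obtain ⟨j, rfl⟩ := Nat.exists_eq_succ_of_ne_zero hk
    rw [← Finset.mul_prod_erase S _ hp, mul_assoc, pow_succ', mul_dvd_mul_iff_left p.ne_bot,
      hcop _ (Finset.notMem_erase p S), Nat.succ_sub_one]
  · exact hcop S hp k

open scoped Classical in
theorem isPowFree_primePowProd_one_mul_iff {e : HeightOneSpectrum R → ℕ} (he : ∀ p, e p ≠ 0)
    (S : Finset (HeightOneSpectrum R)) (I : Ideal R) :
    IsPowFree e ((primePowProd (fun _ ↦ 1) S).1 * I) ↔
      IsPowFree (S.piecewise (fun p ↦ e p - 1) e) I :=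
  forall_congr' fun p ↦ not_congr <| asIdeal_pow_dvd_primePowProd_one_mul_iff (he p) I

variable [Module.Free ℤ R]

theorem absNorm_primePowProd_one (S : Finset (HeightOneSpectrum R)) :
    absNorm (primePowProd (fun _ ↦ 1) S).1 = ∏ p ∈ S, absNorm p.asIdeal := by
  simp [primePowProd]

theorem idealCount_le_of_abs_sub_le {κ M θ : ℝ} (hθ1 : θ ≤ 1)
    (hcount : ∀ x, 0 < x → |idealCount R x - κ * x| ≤ M * x ^ θ) {x : ℝ} (hx : 1 ≤ x) :
    idealCount R x ≤ (κ + M) * x := by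
  have hM : 0 ≤ M := (abs_nonneg _).trans (by simpa using hcount 1 one_pos)
  have hpow : M * x ^ θ ≤ M * x := by
    gcongr
    exact Real.rpow_le_self_of_one_le hx hθ1
  linarith [le_of_abs_le (hcount x (zero_lt_one.trans_le hx))]

variable [Module.Finite ℤ R]

open scoped Classical in
theorem card_isPowFree_forall_dvd {e : HeightOneSpectrum R → ℕ} (he : ∀ p, e p ≠ 0)
    (S : Finset (HeightOneSpectrum R)) (x : ℝ) :
    Nat.card {I : (Ideal R)⁰ |
        IsPowFree e I.1 ∧ (∀ p ∈ S, p.asIdeal ∣ I.1) ∧ (absNorm I.1 : ℝ) ≤ x} =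
      Nat.card {I : (Ideal R)⁰ | IsPowFree (S.piecewise (fun p ↦ e p - 1) e) I.1 ∧
        (absNorm I.1 : ℝ) ≤ x / ∏ p ∈ S, (absNorm p.asIdeal : ℝ)} := by
  set a := primePowProd (fun _ ↦ 1) S
  have ha : ∏ p ∈ S, (absNorm p.asIdeal : ℝ) = absNorm a.1 := by
    simp [a, absNorm_primePowProd_one]
  have hdvd (I : (Ideal R)⁰) : (∀ p ∈ S, p.asIdeal ∣ I.1) ↔ I ∈ Set.range (a * ·) := by
    rw [range_mul_left_nonZeroDivisors]
    simp [a, primePowProd_dvd_iff]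
  refine Eq.trans ?_ (Nat.card_image_of_injective (injective_mul_left_nonZeroDivisors a) _)
  refine congrArg (fun A : Set (Ideal R)⁰ ↦ Nat.card A) (Set.ext fun I ↦ ?_)
  constructor
  · rintro ⟨hfree, hS, hx⟩
    obtain ⟨J, rfl⟩ := (hdvd I).mp hS
    refine ⟨J, ⟨(isPowFree_primePowProd_one_mul_iff he S _).mp hfree, ?_⟩, rfl⟩
    rw [ha, le_div_iff₀' (absNorm_pos a)]
    simpa using hx
  · rintro ⟨J, ⟨hfree, hx⟩, rfl⟩
    refine ⟨(isPowFree_primePowProd_one_mul_iff he S _).mpr hfree, (hdvd _).mpr ⟨J, rfl⟩, ?_⟩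
    rw [ha, le_div_iff₀' (absNorm_pos a)] at hx
    simpa using hx

open scoped Classical in
theorem tprod_one_sub_absNorm_rpow_piecewise {h : ℕ} (hh : h ≠ 0)
    (hs : Summable fun I : (Ideal R)⁰ ↦ (absNorm I.1 : ℝ) ^ (-(h : ℝ)))
    (S : Finset (HeightOneSpectrum R)) :
    ∏' p : HeightOneSpectrum R, (1 - (absNorm p.asIdeal : ℝ) ^
        (-((S.piecewise (fun _ ↦ h - 1) (fun _ ↦ h) p : ℕ) : ℝ))) =
      (∑' I : (Ideal R)⁰, (absNorm I.1 : ℝ) ^ (-(h : ℝ)))⁻¹ * ((∏ p ∈ S, (absNorm p.asIdeal : ℝ)) *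
        ∏ p ∈ S, ((absNorm p.asIdeal : ℝ) ^ (h - 1) - 1) / ((absNorm p.asIdeal : ℝ) ^ h - 1)) := by
  let F (k : ℕ) (p : HeightOneSpectrum R) : ℝ := 1 - (absNorm p.asIdeal : ℝ) ^ (-(k : ℝ))
  have hfac (p : HeightOneSpectrum R) : F (h - 1) p / F h p =
      absNorm p.asIdeal *
        (((absNorm p.asIdeal : ℝ) ^ (h - 1) - 1) / ((absNorm p.asIdeal : ℝ) ^ h - 1)) := by
    obtain ⟨k, rfl⟩ := Nat.exists_eq_succ_of_ne_zero hh
    have hp := one_lt_absNorm_asIdeal p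
    have hpow : (absNorm p.asIdeal : ℝ) ^ (k + 1) - 1 ≠ 0 := (sub_pos.mpr (one_lt_pow₀ hp hh)).ne'
    have hp0 := zero_lt_one.trans hp
    simp only [F, Real.rpow_neg hp0.le, Real.rpow_natCast, Nat.succ_eq_add_one,
      Nat.add_sub_cancel]
    field_simp
    ring
  have hF (p) : F h p ≠ 0 :=
    (sub_pos.mpr (Real.rpow_lt_one_of_one_lt_of_neg (one_lt_absNorm_asIdeal p)
      (by simpa using hh.bot_lt))).ne'
  rw [← Finset.prod_mul_distrib, ← Finset.prod_congr rfl fun p _ ↦ hfac p,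
    ← (hasProd_piecewise (hasProd_one_sub_absNorm_rpow hs) S fun p _ ↦ hF p).tprod_eq]
  refine tprod_congr fun p ↦ ?_
  by_cases hp : p ∈ S <;> simp [hp, F]

open scoped Classical in
theorem tprod_one_add_absNorm_rpow_piecewise_le {h : ℕ} {θ : ℝ} (hθ : 0 ≤ θ)
    (hs : Summable fun p : HeightOneSpectrum R ↦ (absNorm p.asIdeal : ℝ) ^ (-(h * θ)))
    (S : Finset (HeightOneSpectrum R)) :
    ∏' p : HeightOneSpectrum R, (1 + (absNorm p.asIdeal : ℝ) ^
        (-((S.piecewise (fun _ ↦ h - 1) (fun _ ↦ h) p : ℕ) * θ))) ≤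
      (∏' p : HeightOneSpectrum R, (1 + (absNorm p.asIdeal : ℝ) ^ (-(h * θ)))) * 2 ^ S.card := by
  let G (k : ℕ) (p : HeightOneSpectrum R) : ℝ := 1 + (absNorm p.asIdeal : ℝ) ^ (-(k * θ))
  have hG (k p) : 1 ≤ G k p := le_add_of_nonneg_right (by positivity)
  have hratio (p) : G (h - 1) p / G h p ≤ 2 := by
    refine (div_le_self (zero_le_one.trans (hG _ p)) (hG h p)).trans ?_
    have := Real.rpow_le_one_of_one_le_of_nonpos (one_lt_absNorm_asIdeal p).le
      (neg_nonpos.mpr (mul_nonneg (Nat.cast_nonneg (h - 1)) hθ))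
    linarith
  have hprod : HasProd (G h) (∏' p, G h p) :=
    (multipliable_one_add_of_summable hs.norm).hasProd
  have hpos : 0 ≤ ∏' p, G h p :=
    ge_of_tendsto' hprod fun _ ↦ Finset.prod_nonneg fun p _ ↦ zero_le_one.trans (hG h p)
  calc _ = (∏' p, G h p) * ∏ p ∈ S, G (h - 1) p / G h p := by
        rw [← (hasProd_piecewise hprod S fun p _ ↦ (zero_lt_one.trans_le (hG h p)).ne').tprod_eq]
        refine tprod_congr fun p ↦ ?_
        by_cases hp : p ∈ S <;> simp [hp, G]
    _ ≤ _ := mul_le_mul_of_nonneg_left ((Finset.prod_le_prod (fun p _ ↦ div_nonneg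
        (zero_le_one.trans (hG _ p)) (zero_le_one.trans (hG h p))) fun p _ ↦ hratio p).trans_eq
        (Finset.prod_const 2)) hpos

variable [CharZero R]

open scoped Classical in
theorem abs_card_isPowFree_forall_dvd_sub_le {κ M θ : ℝ} (hθ1 : θ ≤ 1)
    (hcount : ∀ x, 0 < x → |idealCount R x - κ * x| ≤ M * x ^ θ) {h : ℕ} (hh : 2 ≤ h)
    (hθ : 1 < h * θ) (S : Finset (HeightOneSpectrum R)) {x : ℝ} (hx : 0 < x) :
    |(Nat.card {I : (Ideal R)⁰ | IsPowFree (fun _ ↦ h) I.1 ∧ (∀ p ∈ S, p.asIdeal ∣ I.1) ∧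
          (absNorm I.1 : ℝ) ≤ x} : ℝ) -
        (∏ p ∈ S, ((absNorm p.asIdeal : ℝ) ^ (h - 1) - 1) / ((absNorm p.asIdeal : ℝ) ^ h - 1)) *
          (κ / ∑' I : (Ideal R)⁰, (absNorm I.1 : ℝ) ^ (-(h : ℝ))) * x| ≤
      M * (∏' p : HeightOneSpectrum R, (1 + (absNorm p.asIdeal : ℝ) ^ (-(h * θ)))) *
        2 ^ S.card * (x ^ θ / ∏ p ∈ S, (absNorm p.asIdeal : ℝ) ^ θ) := by
  set e : HeightOneSpectrum R → ℕ := S.piecewise (fun _ ↦ h - 1) fun _ ↦ h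
  set N := ∏ p ∈ S, (absNorm p.asIdeal : ℝ)
  have hN : 0 < N := Finset.prod_pos fun p _ ↦ zero_lt_one.trans (one_lt_absNorm_asIdeal p)
  have hM : 0 ≤ M := (abs_nonneg _).trans (by simpa using hcount 1 one_pos)
  have hθ0 : 0 ≤ θ := by
    by_contra! hneg
    nlinarith [(Nat.cast_nonneg h : (0 : ℝ) ≤ h)]
  have hζ (s : ℝ) (hs : 1 < s) : Summable fun I : (Ideal R)⁰ ↦ (absNorm I.1 : ℝ) ^ (-s) :=
    summable_absNorm_rpow (fun _ ↦ idealCount_le_of_abs_sub_le hθ1 hcount) hs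
  have hprime := summable_absNorm_asIdeal_rpow (hζ _ hθ)
  have he : ∀ p, e p ≠ 0 := by
    intro p
    by_cases hp : p ∈ S <;> simp [e, hp] <;> omega
  have hpw : Summable fun p : HeightOneSpectrum R ↦ (absNorm p.asIdeal : ℝ) ^ (-(e p * θ)) := by
    refine hprime.congr_cofinite ?_
    filter_upwards [S.finite_toSet.compl_mem_cofinite] with p hp
    simp only [e, S.piecewise_eq_of_notMem _ _ (by simpa using hp)]
  have hcard := card_isPowFree_forall_dvd (e := fun _ ↦ h) (fun _ ↦ by omega) S x
  have hbound := abs_card_isPowFree_sub_le hθ1 hcount he hpw (div_pos hx hN)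
  rw [tprod_one_sub_absNorm_rpow_piecewise (by omega) (hζ h (by exact_mod_cast hh)) S] at hbound
  have hmain (ζ P : ℝ) : κ * (ζ⁻¹ * (N * P)) * (x / N) = P * (κ / ζ) * x := by field_simp
  rw [hmain] at hbound
  rw [hcard]
  refine hbound.trans ?_
  rw [Real.div_rpow hx.le hN.le, ← Real.finsetProd_rpow _ _ fun _ _ ↦ by positivity,
    mul_assoc M _ (2 ^ _)]
  gcongr
  exact tprod_one_add_absNorm_rpow_piecewise_le hθ0 hprime S

end PrescribedDivisors

section Packing

open MeasureTheory
open scoped Pointwise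

variable {E : Type*} [AddGroup E] [MeasurableSpace E] {μ : Measure E} [μ.IsAddLeftInvariant]
  {F B : Set E}

theorem measureReal_le_card_mul_of_subset_add [MeasurableAdd E] {A : Finset E}
    (hF : μ F ≠ ⊤) (hB : B ⊆ (A : Set E) + F) : μ.real B ≤ A.card * μ.real F := by
  rw [← Set.iUnion_add_left_image] at hB
  calc μ.real B ≤ μ.real (⋃ v ∈ A, v +ᵥ F) :=
        measureReal_mono hB ((measure_biUnion_lt_top A.finite_toSet fun v _ ↦ by
          simpa using hF.lt_top).ne)
    _ ≤ ∑ v ∈ A, μ.real (v +ᵥ F) := measureReal_biUnion_finset_le _ _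
    _ = A.card * μ.real F := by simp [measureReal_def]

theorem card_mul_measureReal_le_of_add_subset [MeasurableAdd E] {A : Finset E}
    (hF : MeasurableSet F) (hA : (A : Set E).PairwiseDisjoint (· +ᵥ F)) (hB : μ B ≠ ⊤)
    (hAB : (A : Set E) + F ⊆ B) : A.card * μ.real F ≤ μ.real B := by
  rw [← Set.iUnion_add_left_image] at hAB
  calc A.card * μ.real F = ∑ v ∈ A, μ.real (v +ᵥ F) := by simp [measureReal_def]
    _ = μ.real (⋃ v ∈ A, v +ᵥ F) :=
        (measureReal_biUnion_finset hA (fun v _ ↦ hF.const_vadd v) fun v hv ↦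
          measure_ne_top_of_subset ((Set.subset_biUnion_of_mem hv).trans hAB) hB).symm
    _ ≤ μ.real B := measureReal_mono hAB hB

end Packing

section Lattice

open scoped Pointwise

variable {E ι : Type*} [NormedAddCommGroup E] [NormedSpace ℝ E]

theorem pairwiseDisjoint_span_vadd_fundamentalDomain [Finite ι] (b : Module.Basis ι ℝ E) :
    (Submodule.span ℤ (Set.range b) : Set E).PairwiseDisjoint
      (· +ᵥ ZSpan.fundamentalDomain b) := by
  intro v hv w hw hvw
  refine Set.disjoint_left.mpr fun x hxv hxw ↦ hvw ?_
  have hneg {u : E} (hu : u ∈ Submodule.span ℤ (Set.range b))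
      (hx : x ∈ u +ᵥ ZSpan.fundamentalDomain b) :
      (⟨-u, neg_mem hu⟩ : Submodule.span ℤ (Set.range b)) +ᵥ x ∈ ZSpan.fundamentalDomain b :=
    Set.mem_vadd_set_iff_neg_vadd_mem.mp hx
  simpa using (ZSpan.exist_unique_vadd_mem_fundamentalDomain b x).unique (hneg hv hxv) (hneg hw hxw)

theorem exists_mem_span_sub_mem_fundamentalDomain [Finite ι] (b : Module.Basis ι ℝ E) (x : E) :
    ∃ v ∈ Submodule.span ℤ (Set.range b), x - v ∈ ZSpan.fundamentalDomain b :=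
  have := Fintype.ofFinite ι
  ⟨_, (ZSpan.floor b x).2, ZSpan.fract_mem_fundamentalDomain b x⟩

end Lattice

section LogCoordinates

open NumberField NumberField.InfinitePlace NumberField.mixedEmbedding
  NumberField.mixedEmbedding.fundamentalCone NumberField.Units.dirichletUnitTheorem

theorem abs_log_sub_log_le {a b m : ℝ} (hm : 0 < m) (ha : m ≤ a) (hb : m ≤ b) :
    |Real.log a - Real.log b| ≤ |a - b| / m := by
  have hderiv {x : ℝ} (hx : x ∈ Set.Ici m) : HasDerivWithinAt Real.log x⁻¹ (Set.Ici m) x :=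
    (Real.hasDerivAt_log (hm.trans_le hx).ne').hasDerivWithinAt
  have hbound {x : ℝ} (hx : x ∈ Set.Ici m) : ‖x⁻¹‖ ≤ m⁻¹ := by
    rw [norm_inv, Real.norm_of_nonneg (hm.le.trans hx)]
    exact inv_anti₀ hm hx
  simpa [div_eq_inv_mul] using (convex_Ici m).norm_image_sub_le_of_norm_hasDerivWithin_le
    (fun x hx ↦ hderiv hx) (fun x hx ↦ hbound hx) hb ha

variable {F : Type*} [Field F] [NumberField F]

open scoped Classical in
theorem abs_normAtPlace_sub_le (w : InfinitePlace F) (x y : mixedSpace F) :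
    |normAtPlace w x - normAtPlace w y| ≤ ‖x - y‖ := by
  have h (x y : mixedSpace F) : normAtPlace w x - normAtPlace w y ≤ ‖x - y‖ := by
    have hadd := normAtPlace_add_le w (x - y) y
    rw [sub_add_cancel] at hadd
    have hsup : normAtPlace w (x - y) ≤ ‖x - y‖ := by
      rw [norm_eq_sup'_normAtPlace]
      exact Finset.le_sup' (fun w ↦ normAtPlace w (x - y)) (Finset.mem_univ w)
    linarith
  exact abs_sub_le_iff.mpr ⟨h x y, norm_sub_rev x y ▸ h y x⟩

/-- The inverse of `expMapBasis` on the absolute values of `z`: the coordinates of the logarithmic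
vector of `z` in the basis `completeBasis`. The coordinate at `w₀` measures the norm, and
`fundamentalCone F` is cut out by the other coordinates lying in `[0, 1)`. -/
def logCoord (z : mixedSpace F) : realSpace F :=
  (completeBasis F).equivFunL fun w ↦ mult w * Real.log (normAtPlace w z)

theorem expMapBasis_logCoord {z : mixedSpace F} (hz : ∀ w, 0 < normAtPlace w z) :
    expMapBasis (logCoord z) = normAtAllPlaces z := by
  have hsymm : (completeBasis F).equivFun.symm (logCoord z) =
      fun w ↦ mult w * Real.log (normAtPlace w z) :=
    (completeBasis F).equivFun.symm_apply_apply _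
  ext w
  rw [expMapBasis_apply, hsymm, expMap_apply, inv_mul_cancel_left₀ mult_coe_ne_zero,
    Real.exp_log (hz w)]

theorem norm_eq_exp_logCoord {z : mixedSpace F} (hz : ∀ w, 0 < normAtPlace w z) :
    mixedEmbedding.norm z = Real.exp (Module.finrank ℚ F * logCoord z w₀) := by
  rw [← norm_normAtAllPlaces, ← expMapBasis_logCoord hz, norm_expMapBasis, Real.exp_nat_mul]

theorem mem_fundamentalCone_iff_logCoord {z : mixedSpace F} :
    z ∈ fundamentalCone F ↔
      (∀ w, 0 < normAtPlace w z) ∧ ∀ w ≠ w₀, 0 ≤ logCoord z w ∧ logCoord z w < 1 := by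
  classical
  by_cases hz : ∀ w, 0 < normAtPlace w z
  · have hn : mixedEmbedding.norm z ≠ 0 := by
      rw [norm_eq_exp_logCoord hz]
      positivity
    rw [fundamentalCone, Set.mem_sdiff, Set.mem_preimage, ← logMap_normAtAllPlaces,
      ← expMapBasis_logCoord hz, logMap_expMapBasis]
    simp [hz, hn, Set.mem_Ico]
  · exact iff_of_false (fun h ↦ hz fun w ↦ normAtPlace_pos_of_mem h w) fun h ↦ hz h.1

theorem exp_neg_le_expMapBasis (x : realSpace F) (w : InfinitePlace F) :
    Real.exp (-(‖((completeBasis F).equivFunL.symm : realSpace F →L[ℝ] realSpace F)‖ * ‖x‖)) ≤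
      expMapBasis x w := by
  set L := ((completeBasis F).equivFunL.symm : realSpace F →L[ℝ] realSpace F)
  have hmult : (1 : ℝ) ≤ mult w := one_le_mult
  have hcoord : |(mult w : ℝ)⁻¹ * L x w| ≤ ‖L‖ * ‖x‖ := by
    rw [abs_mul, abs_of_pos (by positivity)]
    calc (mult w : ℝ)⁻¹ * |L x w| ≤ |L x w| :=
          mul_le_of_le_one_left (abs_nonneg _) (inv_le_one_of_one_le₀ hmult)
      _ ≤ ‖L x‖ := norm_le_pi_norm (L x) w
      _ ≤ ‖L‖ * ‖x‖ := L.le_opNorm x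
  rw [expMapBasis_apply, expMap_apply]
  exact Real.exp_le_exp.mpr (neg_le_of_abs_le hcoord)

variable (F) in
theorem exists_mul_exp_le_expMapBasis (B : ℝ) : ∃ c > 0, ∀ x : realSpace F,
    (∀ w ≠ w₀, |x w| ≤ B) → ∀ w, c * Real.exp (x w₀) ≤ expMapBasis x w := by
  classical
  set L := ((completeBasis F).equivFunL.symm : realSpace F →L[ℝ] realSpace F)
  refine ⟨Real.exp (-(‖L‖ * |B|)), Real.exp_pos _, fun x hx w ↦ ?_⟩
  have hnorm : ‖fun i ↦ if i = w₀ then 0 else x i‖ ≤ |B| := by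
    refine (pi_norm_le_iff_of_nonneg (abs_nonneg B)).mpr fun i ↦ ?_
    split_ifs with hi
    · simp
    · exact (hx i hi).trans (le_abs_self B)
  rw [expMapBasis_apply'', Pi.smul_apply, smul_eq_mul, mul_comm]
  refine mul_le_mul_of_nonneg_left (le_trans ?_ (exp_neg_le_expMapBasis _ w)) (Real.exp_nonneg _)
  gcongr

open scoped Classical in
theorem norm_logCoord_sub_le {z v : mixedSpace F} {m : ℝ} (hm : 0 < m)
    (hz : ∀ w, m ≤ normAtPlace w z) (hv : ∀ w, m ≤ normAtPlace w v) :
    ‖logCoord v - logCoord z‖ ≤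
      ‖((completeBasis F).equivFunL : realSpace F →L[ℝ] realSpace F)‖ * (2 * (‖z - v‖ / m)) := by
  rw [logCoord, logCoord, ← map_sub]
  refine ((completeBasis F).equivFunL : realSpace F →L[ℝ] realSpace F).le_opNorm_of_le <|
    (pi_norm_le_iff_of_nonneg (by positivity)).mpr fun w ↦ ?_
  have hmult : |(mult w : ℝ)| ≤ 2 := by
    rw [Nat.abs_cast, InfinitePlace.mult]
    split_ifs <;> norm_num
  have hlog : |Real.log (normAtPlace w v) - Real.log (normAtPlace w z)| ≤ ‖z - v‖ / m := by
    refine (abs_log_sub_log_le hm (hv w) (hz w)).trans ?_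
    gcongr
    exact norm_sub_rev z v ▸ abs_normAtPlace_sub_le w v z
  rw [Pi.sub_apply, ← mul_sub, Real.norm_eq_abs, abs_mul]
  exact mul_le_mul hmult hlog (abs_nonneg _) zero_le_two

variable (F) in
open scoped Classical in
theorem exists_abs_logCoord_sub_lt {R : ℝ} (hR : 0 ≤ R) : ∃ D > 0, ∀ {z v : mixedSpace F} {σ : ℝ},
    (∀ w, 0 < normAtPlace w z) → (∀ w ≠ w₀, |logCoord z w| ≤ 2) → σ ≤ logCoord z w₀ →
    ‖z - v‖ ≤ R → D * Real.exp (-σ) ≤ 1 →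
    (∀ w, 0 < normAtPlace w v) ∧ ∀ w, |logCoord v w - logCoord z w| < D * Real.exp (-σ) := by
  obtain ⟨c, hc, hlow⟩ := exists_mul_exp_le_expMapBasis F 2
  set O := ‖((completeBasis F).equivFunL : realSpace F →L[ℝ] realSpace F)‖
  set D := (2 * R + 4 * O * R) / c + 1
  have hD : 2 * R ≤ c * D := by
    have : c * D = 2 * R + 4 * O * R + c := by simp only [D]; field_simp
    nlinarith [norm_nonneg ((completeBasis F).equivFunL : realSpace F →L[ℝ] realSpace F)]
  refine ⟨D, by positivity, fun {z v σ} hz hz2 hσ hzv hDσ ↦ ?_⟩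
  set m := c * Real.exp σ / 2 with hm
  have hm0 : 0 < m := by positivity
  have hinv : Real.exp (-σ) = c / (2 * m) := by
    rw [hm, Real.exp_neg]
    field_simp
  have hRm : R ≤ m := by
    rw [hinv, mul_div_assoc', div_le_one (by positivity)] at hDσ
    linarith
  have hzm (w) : 2 * m ≤ normAtPlace w z := by
    have h := hlow _ hz2 w
    rw [expMapBasis_logCoord hz] at h
    refine le_trans ?_ h
    rw [hm, mul_div_cancel₀ _ two_ne_zero]
    gcongr
  have hvm (w) : m ≤ normAtPlace w v := by
    linarith [hzm w, le_of_abs_le (abs_normAtPlace_sub_le w z v)]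
  refine ⟨fun w ↦ hm0.trans_le (hvm w), fun w ↦ ?_⟩
  calc |logCoord v w - logCoord z w| ≤ ‖logCoord v - logCoord z‖ :=
        norm_le_pi_norm (logCoord v - logCoord z) w
    _ ≤ O * (2 * (‖z - v‖ / m)) := norm_logCoord_sub_le hm0 (fun w ↦ by linarith [hzm w]) hvm
    _ ≤ O * (2 * (R / m)) := by gcongr
    _ = (4 * O * R / c) * Real.exp (-σ) := by rw [hinv]; field_simp; ring
    _ < D * Real.exp (-σ) := by
        gcongr
        refine lt_add_of_le_of_pos ?_ one_pos
        gcongr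
        linarith

end LogCoordinates

section ConeBox

open MeasureTheory NumberField NumberField.InfinitePlace NumberField.mixedEmbedding
  NumberField.mixedEmbedding.fundamentalCone NumberField.Units
  NumberField.Units.dirichletUnitTheorem

theorem setLIntegral_univ_pi_comp_eval {ι : Type*} [Fintype ι] [DecidableEq ι] {X : ι → Type*}
    [∀ i, MeasurableSpace (X i)] (μ : ∀ i, Measure (X i)) [∀ i, SigmaFinite (μ i)]
    (s : ∀ i, Set (X i)) (i : ι) {f : X i → ENNReal} (hf : Measurable f) :
    ∫⁻ x in Set.univ.pi s, f (x i) ∂Measure.pi μ =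
      (∏ j ∈ Finset.univ.erase i, μ j (s j)) * ∫⁻ t in s i, f t ∂μ i := by
  rw [Measure.restrict_pi_pi]
  calc ∫⁻ x, f (x i) ∂Measure.pi (fun j ↦ (μ j).restrict (s j))
      = ∫⁻ t, f t ∂(Measure.pi fun j ↦ (μ j).restrict (s j)).map (Function.eval i) :=
        (lintegral_map hf (measurable_pi_apply i)).symm
    _ = _ := by simp [Measure.pi_map_eval]

theorem setLIntegral_exp_mul_Iic {a : ℝ} (ha : 0 < a) (c : ℝ) :
    ∫⁻ t in Set.Iic c, ENNReal.ofReal (Real.exp (a * t)) =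
      ENNReal.ofReal (Real.exp (a * c) / a) := by
  rw [← ofReal_integral_eq_lintegral_ofReal (integrableOn_exp_mul_Iic ha c)
    (ae_of_all _ fun t ↦ Real.exp_nonneg _), integral_exp_mul_Iic ha]

variable {F : Type*} [Field F] [NumberField F]

variable (F) in
open scoped Classical in
/-- The box in logarithmic coordinates with norm coordinate at most `s` and all other coordinates
in `[-ε, 1 + ε)`. -/
def logBox (s ε : ℝ) : Set (realSpace F) :=
  Set.univ.pi fun w ↦ if w = w₀ then Set.Iic s else Set.Ico (-ε) (1 + ε)

variable (F) in
/-- The vectors of the mixed space with logarithmic coordinates in `logBox F s ε`: for `ε = 0` this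
is the part of the fundamental cone of norm at most `exp (n * s)`, for `ε ≠ 0` a slightly larger or
smaller region. -/
def coneBox (s ε : ℝ) : Set (mixedSpace F) :=
  normAtAllPlaces ⁻¹' (expMapBasis '' logBox F s ε)

theorem mem_logBox {s ε : ℝ} {x : realSpace F} :
    x ∈ logBox F s ε ↔ x w₀ ≤ s ∧ ∀ w ≠ w₀, -ε ≤ x w ∧ x w < 1 + ε := by
  rw [logBox, Set.mem_univ_pi]
  constructor
  · exact fun h ↦ ⟨by simpa using h w₀, fun w hw ↦ by simpa [hw] using h w⟩
  · rintro ⟨hs, hε⟩ w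
    obtain rfl | hw := eq_or_ne w w₀
    · simpa using hs
    · simpa [hw] using hε w hw

theorem mem_coneBox {s ε : ℝ} {z : mixedSpace F} :
    z ∈ coneBox F s ε ↔ (∀ w, 0 < normAtPlace w z) ∧ logCoord z w₀ ≤ s ∧
      ∀ w ≠ w₀, -ε ≤ logCoord z w ∧ logCoord z w < 1 + ε := by
  rw [← mem_logBox]
  refine ⟨fun ⟨x, hx, hxz⟩ ↦ ?_, fun ⟨hz, hmem⟩ ↦ ⟨_, hmem, expMapBasis_logCoord hz⟩⟩
  have hz (w) : 0 < normAtPlace w z := by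
    rw [← normAtAllPlaces_apply, ← hxz]
    exact expMapBasis_pos x w
  rw [← expMapBasis_logCoord hz] at hxz
  exact ⟨hz, injective_expMapBasis F hxz ▸ hx⟩

theorem mem_coneBox_zero {s : ℝ} {z : mixedSpace F} :
    z ∈ coneBox F s 0 ↔
      z ∈ fundamentalCone F ∧ mixedEmbedding.norm z ≤ Real.exp (Module.finrank ℚ F * s) := by
  have hn : (0 : ℝ) < Module.finrank ℚ F := Nat.cast_pos.mpr Module.finrank_pos
  rw [mem_coneBox, mem_fundamentalCone_iff_logCoord, and_assoc]
  refine and_congr_right fun hz ↦ ?_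
  rw [norm_eq_exp_logCoord hz, Real.exp_le_exp, mul_le_mul_iff_right₀ hn]
  simp [and_comm]

variable (F) in
theorem measurableSet_logBox (s ε : ℝ) : MeasurableSet (logBox F s ε) := by
  refine MeasurableSet.univ_pi fun w ↦ ?_
  split_ifs
  exacts [measurableSet_Iic, measurableSet_Ico]

theorem measurableSet_preimage_image_expMapBasis {s : Set (realSpace F)} (hs : MeasurableSet s) :
    MeasurableSet (normAtAllPlaces ⁻¹' (expMapBasis '' s)) :=
  (hs.image_of_continuousOn_injOn (continuous_expMapBasis F).continuousOn
    (injective_expMapBasis F).injOn).preimage (continuous_normAtAllPlaces F).measurable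

variable (F) in
open scoped Classical in
theorem exists_volume_preimage_image_expMapBasis : ∃ W : NNReal, ∀ s : Set (realSpace F),
    MeasurableSet s → volume (normAtAllPlaces ⁻¹' (expMapBasis '' s)) =
      W * ∫⁻ x in s, ENNReal.ofReal (Real.exp (Module.finrank ℚ F * x w₀)) := by
  set W : ENNReal := 2 ^ nrRealPlaces F * ENNReal.ofReal (2 * Real.pi) ^ nrComplexPlaces F *
    (2⁻¹ ^ nrComplexPlaces F * ENNReal.ofReal (regulator F) * Module.finrank ℚ F)
  have hW : W ≠ ⊤ := by finiteness
  refine ⟨W.toNNReal, fun s hs ↦ ?_⟩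
  rw [volume_eq_two_pow_mul_two_pi_pow_mul_integral Set.preimage_image_preimage
      (measurableSet_preimage_image_expMapBasis hs), normAtAllPlaces_image_preimage_expMapBasis,
    setLIntegral_expMapBasis_image hs (by fun_prop), ENNReal.coe_toNNReal hW, ← mul_assoc]
  congr 1
  refine lintegral_congr fun x ↦ ?_
  rw [ENNReal.inv_mul_cancel_right, mul_comm]
  · exact Finset.prod_ne_zero_iff.mpr fun w _ ↦ ENNReal.ofReal_ne_zero_iff.mpr (expMapBasis_pos x w)
  · exact ENNReal.prod_ne_top fun w _ ↦ ENNReal.ofReal_ne_top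

theorem setLIntegral_logBox_exp {a : ℝ} (ha : 0 < a) (s : ℝ) {ε : ℝ} (hε : -(1 / 2) ≤ ε) :
    ∫⁻ x in logBox F s ε, ENNReal.ofReal (Real.exp (a * x w₀)) = ENNReal.ofReal
      ((1 + 2 * ε) ^ (Nat.card (InfinitePlace F) - 1) * (Real.exp (a * s) / a)) := by
  classical
  have hprod : ∏ w ∈ Finset.univ.erase (w₀ : InfinitePlace F),
      volume (if w = w₀ then Set.Iic s else Set.Ico (-ε) (1 + ε)) =
        ENNReal.ofReal ((1 + 2 * ε) ^ (Nat.card (InfinitePlace F) - 1)) := by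
    rw [Finset.prod_congr rfl fun w hw ↦ by
      rw [if_neg (Finset.ne_of_mem_erase hw), Real.volume_Ico], Finset.prod_const,
      Finset.card_erase_of_mem (Finset.mem_univ _), Finset.card_univ, ← Nat.card_eq_fintype_card,
      ← ENNReal.ofReal_pow (by linarith)]
    ring_nf
  have hint := setLIntegral_univ_pi_comp_eval (fun _ : InfinitePlace F ↦ (volume : Measure ℝ))
    (fun w ↦ if w = w₀ then Set.Iic s else Set.Ico (-ε) (1 + ε)) w₀
    (f := fun t ↦ ENNReal.ofReal (Real.exp (a * t))) (by fun_prop)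
  rw [volume_pi, logBox, hint, hprod, if_pos rfl, setLIntegral_exp_mul_Iic ha,
    ENNReal.ofReal_mul (pow_nonneg (by linarith) _)]

variable (F) in
open scoped Classical in
theorem exists_volume_coneBox : ∃ V : ℝ, 0 ≤ V ∧ ∀ s ε : ℝ, -(1 / 2) ≤ ε →
    volume (coneBox F s ε) ≠ ⊤ ∧ volume.real (coneBox F s ε) =
      V * Real.exp (Module.finrank ℚ F * s) * (1 + 2 * ε) ^ (Nat.card (InfinitePlace F) - 1) := by
  have hn : (0 : ℝ) < Module.finrank ℚ F := Nat.cast_pos.mpr Module.finrank_pos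
  obtain ⟨W, hW⟩ := exists_volume_preimage_image_expMapBasis F
  refine ⟨W / Module.finrank ℚ F, by positivity, fun s ε hε ↦ ?_⟩
  have hpow : 0 ≤ (1 + 2 * ε) ^ (Nat.card (InfinitePlace F) - 1) := pow_nonneg (by linarith) _
  rw [measureReal_def, coneBox, hW _ (measurableSet_logBox F s ε),
    setLIntegral_logBox_exp hn s hε]
  refine ⟨by finiteness, ?_⟩
  rw [ENNReal.toReal_mul, ENNReal.coe_toReal, ENNReal.toReal_ofReal (by positivity)]
  ring

end ConeBox

section LatticeCount

open MeasureTheory ZSpan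
open scoped Pointwise

variable {E ι : Type*} [NormedAddCommGroup E] [NormedSpace ℝ E] [Finite ι]
  (b : Module.Basis ι ℝ E) [MeasurableSpace E] [BorelSpace E] (μ : Measure E) [μ.IsAddHaarMeasure]
  {S B : Set E}

theorem ncard_inter_span_mul_measureReal_le (hS : Bornology.IsBounded S) (hB : μ B ≠ ⊤)
    (h : ∀ v ∈ S, ∀ x, x - v ∈ fundamentalDomain b → x ∈ B) :
    (S ∩ Submodule.span ℤ (Set.range b) : Set E).ncard * μ.real (fundamentalDomain b) ≤
      μ.real B := by
  have := b.finiteDimensional_of_finite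
  have := FiniteDimensional.proper_real E
  have hfin : (S ∩ Submodule.span ℤ (Set.range b) : Set E).Finite :=
    setFinite_inter b hS
  rw [Set.ncard_eq_toFinset_card _ hfin]
  refine card_mul_measureReal_le_of_add_subset (fundamentalDomain_measurableSet b) ?_ hB ?_
  · exact (pairwiseDisjoint_span_vadd_fundamentalDomain b).subset fun v hv ↦ by simp_all
  · rintro _ ⟨v, hv, f, hf, rfl⟩
    rw [hfin.coe_toFinset] at hv
    exact h v hv.1 _ (by simpa using hf)

theorem measureReal_le_ncard_inter_span_mul (hS : Bornology.IsBounded S)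
    (h : ∀ x ∈ B, ∀ v, x - v ∈ fundamentalDomain b → v ∈ S) :
    μ.real B ≤
      (S ∩ Submodule.span ℤ (Set.range b) : Set E).ncard * μ.real (fundamentalDomain b) := by
  have := Fintype.ofFinite ι
  have := b.finiteDimensional_of_finite
  have := FiniteDimensional.proper_real E
  have hfin : (S ∩ Submodule.span ℤ (Set.range b) : Set E).Finite :=
    setFinite_inter b hS
  rw [Set.ncard_eq_toFinset_card _ hfin]
  refine measureReal_le_card_mul_of_subset_add
    (fundamentalDomain_isBounded b).measure_lt_top.ne fun x hx ↦ ?_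
  obtain ⟨v, hv, hxv⟩ := exists_mem_span_sub_mem_fundamentalDomain b x
  exact ⟨v, by simpa using ⟨h x hx v hxv, hv⟩, x - v, hxv, by simp⟩

end LatticeCount

section ConeCount

open MeasureTheory NumberField NumberField.InfinitePlace NumberField.mixedEmbedding
  NumberField.mixedEmbedding.fundamentalCone NumberField.Units.dirichletUnitTheorem ZSpan

variable {F : Type*} [Field F] [NumberField F]

variable (F) in
open scoped Classical in
theorem isBounded_coneBox_zero (s : ℝ) : Bornology.IsBounded (coneBox F s 0) := by
  have hbdd := (isBounded_normLeOne F).smul₀ (E := mixedSpace F) (Real.exp s)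
  refine hbdd.subset fun z hz ↦ ?_
  obtain ⟨hz, hnorm⟩ := mem_coneBox_zero.mp hz
  refine ⟨Real.exp (-s) • z, ⟨smul_mem_of_mem hz (Real.exp_ne_zero _), ?_⟩, ?_⟩
  · have hexp : Real.exp (Module.finrank ℚ F * s) = Real.exp s ^ Module.finrank ℚ F :=
      Real.exp_nat_mul s _
    rw [hexp] at hnorm
    change mixedEmbedding.norm (Real.exp (-s) • z) ≤ 1
    rw [mixedEmbedding.norm_smul, abs_of_pos (Real.exp_pos _), Real.exp_neg, inv_pow]
    exact inv_mul_le_one_of_le₀ hnorm (by positivity)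
  · simp only [smul_smul, ← Real.exp_add, add_neg_cancel, Real.exp_zero, one_smul]

variable (F) in
open scoped Classical in
theorem exists_mem_coneBox_add {R : ℝ} (hR : 0 ≤ R) : ∃ D > 0, ∀ {z v : mixedSpace F} {s σ η : ℝ},
    η ≤ 1 → D * Real.exp (-σ) ≤ 1 → z ∈ coneBox F s η \ coneBox F σ η → ‖z - v‖ ≤ R →
    v ∈ coneBox F (s + D * Real.exp (-σ)) (η + D * Real.exp (-σ)) := by
  obtain ⟨D, hD, hlog⟩ := exists_abs_logCoord_sub_lt F hR
  refine ⟨D, hD, fun {z v s σ η} hη hσ hz hzv ↦ ?_⟩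
  simp only [Set.mem_sdiff, mem_coneBox, not_and] at hz
  obtain ⟨⟨hpos, hzs, hzη⟩, hzσ⟩ := hz
  have hσz : σ ≤ logCoord z w₀ := le_of_not_ge fun h ↦ hzσ hpos h hzη
  have hz2 (w) (hw : w ≠ w₀) : |logCoord z w| ≤ 2 := by
    have := hzη w hw
    exact abs_le.mpr ⟨by linarith, by linarith⟩
  obtain ⟨hvpos, hvz⟩ := hlog hpos hz2 hσz hzv hσ
  have hvz (w) := abs_lt.mp (hvz w)
  refine mem_coneBox.mpr ⟨hvpos, by linarith [hvz w₀], fun w hw ↦ ?_⟩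
  have := hzη w hw
  have := hvz w
  constructor <;> linarith

/-- The number of points of the lattice spanned by `b` that lie in the fundamental cone and have
norm at most `exp (n * s)`. -/
def coneCount {ι : Type*} (b : Module.Basis ι ℝ (mixedSpace F)) (s : ℝ) : ℕ :=
  (coneBox F s 0 ∩ Submodule.span ℤ (Set.range b) : Set (mixedSpace F)).ncard

variable {ι : Type*} [Finite ι] (b : Module.Basis ι ℝ (mixedSpace F))

open scoped Classical in
/-- The translates of the fundamental domain by the lattice points of `coneBox F s 0` are disjoint
and fill it up to errors near its boundary, which enlarging or shrinking the box by
`ε = D * exp (-σ)` absorbs. As this `ε` suffices only away from the origin, the part of norm at most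
`exp (n * σ)` is cut off. -/
theorem exists_coneCount_bounds : ∃ D > 0, ∀ s σ : ℝ, D * Real.exp (-σ) ≤ 1 / 2 →
    coneCount b s * volume.real (fundamentalDomain b) ≤
      coneCount b σ * volume.real (fundamentalDomain b) +
        volume.real (coneBox F (s + D * Real.exp (-σ)) (D * Real.exp (-σ))) ∧
    volume.real (coneBox F (s - D * Real.exp (-σ)) (-(D * Real.exp (-σ)))) ≤
      coneCount b s * volume.real (fundamentalDomain b) +
        volume.real (coneBox F σ (-(D * Real.exp (-σ)))) := by
  have := Fintype.ofFinite ι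
  obtain ⟨R, hR, hbound⟩ := (fundamentalDomain_isBounded b).exists_pos_norm_le
  obtain ⟨D, hD, hbox⟩ := exists_mem_coneBox_add F hR.le
  obtain ⟨V, -, hV⟩ := exists_volume_coneBox F
  refine ⟨D, hD, fun s σ hε ↦ ?_⟩
  have hε0 : 0 < D * Real.exp (-σ) := by positivity
  constructor
  · have hpack := ncard_inter_span_mul_measureReal_le b volume (S := coneBox F s 0 \ coneBox F σ 0)
      ((isBounded_coneBox_zero F s).subset Set.sdiff_subset)
      (hV (s + D * Real.exp (-σ)) (D * Real.exp (-σ)) (by linarith)).1 fun v hv x hx ↦ by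
        simpa using hbox zero_le_one (by linarith) hv (norm_sub_rev v x ▸ hbound _ hx)
    have hcard : (coneCount b s : ℝ) ≤ ((coneBox F s 0 \ coneBox F σ 0) ∩
        Submodule.span ℤ (Set.range b) : Set (mixedSpace F)).ncard + coneCount b σ := by
      rw [Set.inter_sdiff_distrib_right]
      exact mod_cast Set.ncard_le_ncard_sdiff_add_ncard _ _
        (setFinite_inter b (isBounded_coneBox_zero F σ))
    linarith [mul_le_mul_of_nonneg_right hcard
      (measureReal_nonneg (μ := volume) (s := fundamentalDomain b))]
  · have hcover := measureReal_le_ncard_inter_span_mul b volume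
      (B := coneBox F (s - D * Real.exp (-σ)) (-(D * Real.exp (-σ))) \
        coneBox F σ (-(D * Real.exp (-σ)))) (isBounded_coneBox_zero F s) fun x hx v hxv ↦ by
        simpa using hbox (by linarith) (by linarith) hx (hbound _ hxv)
    have hsdiff := le_measureReal_sdiff (μ := volume)
      (s₁ := coneBox F (s - D * Real.exp (-σ)) (-(D * Real.exp (-σ))))
      (hV σ (-(D * Real.exp (-σ))) (by linarith)).1
    exact tsub_le_iff_right.mp (hsdiff.trans hcover)

end ConeCount

section Asymptotics

theorem isBigO_of_le_of_le {α : Type*} {l : Filter α} {f₁ f f₂ g : α → ℝ} (h₁ : f₁ =O[l] g)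
    (h₂ : f₂ =O[l] g) (hle₁ : ∀ᶠ a in l, f₁ a ≤ f a) (hle₂ : ∀ᶠ a in l, f a ≤ f₂ a) :
    f =O[l] g := by
  refine .trans (.of_bound 1 ?_) (h₁.norm_left.add h₂.norm_left)
  filter_upwards [hle₁, hle₂] with a ha₁ ha₂
  rw [one_mul, Real.norm_of_nonneg (add_nonneg (norm_nonneg _) (norm_nonneg _))]
  refine abs_le.mpr ⟨?_, ?_⟩
  · linarith [neg_abs_le (f₁ a), norm_nonneg (f₂ a), Real.norm_eq_abs (f₁ a)]
  · linarith [le_abs_self (f₂ a), norm_nonneg (f₁ a), Real.norm_eq_abs (f₂ a)]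

theorem isBigO_exp_mul_one_add_pow_sub_one (n : ℝ) (r : ℕ) :
    (fun ε : ℝ ↦ Real.exp (n * ε) * (1 + 2 * ε) ^ r - 1) =O[𝓝 0] fun ε ↦ ε := by
  have hdiff : DifferentiableAt ℝ (fun ε : ℝ ↦ Real.exp (n * ε) * (1 + 2 * ε) ^ r) 0 := by fun_prop
  simpa using hdiff.isBigO_sub

variable {N : ℝ → ℝ} {n D V : ℝ} {r : ℕ}

theorem isBigO_exp_of_le_add (hN : ∀ s, 0 ≤ N s) (hn : 0 < n)
    (hupper : ∀ s σ, D * Real.exp (-σ) ≤ 1 / 2 → N s ≤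
      N σ + V * Real.exp (n * (s + D * Real.exp (-σ))) * (1 + 2 * (D * Real.exp (-σ))) ^ r) :
    N =O[atTop] fun s ↦ Real.exp (n * s) := by
  have hε : Tendsto (fun σ ↦ D * Real.exp (-σ)) atTop (𝓝 0) := by
    simpa using (Real.tendsto_exp_neg_atTop_nhds_zero).const_mul D
  obtain ⟨σ, hσ⟩ := (hε.eventually_le_const one_half_pos).exists
  set ε := D * Real.exp (-σ)
  have hone : (fun _ ↦ N σ) =O[atTop] fun s ↦ Real.exp (n * s) := by
    refine (Asymptotics.isLittleO_const_left.mpr (.inr ?_)).isBigO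
    exact tendsto_norm_atTop_atTop.comp <|
      Real.tendsto_exp_atTop.comp (tendsto_id.const_mul_atTop hn)
  have hexp : (fun s ↦ V * Real.exp (n * (s + ε)) * (1 + 2 * ε) ^ r) =O[atTop]
      fun s ↦ Real.exp (n * s) := by
    have h := (Asymptotics.isBigO_refl (fun s ↦ Real.exp (n * s)) atTop).const_mul_left
      (V * Real.exp (n * ε) * (1 + 2 * ε) ^ r)
    refine h.congr_left fun s ↦ ?_
    rw [mul_add, Real.exp_add]
    ring
  exact isBigO_of_le_of_le (Asymptotics.isBigO_zero _ _) (hone.add hexp)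
    (.of_forall hN) (.of_forall fun s ↦ hupper s σ hσ)

theorem exp_mul_exp_neg_div_add_one (hn : n + 1 ≠ 0) (s : ℝ) :
    Real.exp (n * s) * Real.exp (-(n / (n + 1) * s)) = Real.exp (n * (n / (n + 1) * s)) := by
  rw [← Real.exp_add]
  congr 1
  field_simp
  ring

/-- Balancing the two error terms `exp (n * σ)` and `exp (n * s - σ)` gives
`σ = n / (n + 1) * s`. -/
theorem isBigO_sub_mul_exp_of_le_add (hN : ∀ s, 0 ≤ N s) (hn : 0 < n)
    (hupper : ∀ s σ, D * Real.exp (-σ) ≤ 1 / 2 → N s ≤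
      N σ + V * Real.exp (n * (s + D * Real.exp (-σ))) * (1 + 2 * (D * Real.exp (-σ))) ^ r)
    (hlower : ∀ s σ, D * Real.exp (-σ) ≤ 1 / 2 →
      V * Real.exp (n * (s - D * Real.exp (-σ))) * (1 + 2 * -(D * Real.exp (-σ))) ^ r ≤
        N s + V * Real.exp (n * σ) * (1 + 2 * -(D * Real.exp (-σ))) ^ r) :
    (fun s ↦ N s - V * Real.exp (n * s)) =O[atTop] fun s ↦ Real.exp (n * (n / (n + 1) * s)) := by
  set σ : ℝ → ℝ := fun s ↦ n / (n + 1) * s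
  set ε : ℝ → ℝ := fun s ↦ D * Real.exp (-σ s)
  set g : ℝ → ℝ := fun s ↦ Real.exp (n * σ s)
  set φ : ℝ → ℝ := fun ε ↦ Real.exp (n * ε) * (1 + 2 * ε) ^ r
  have hσ : Tendsto σ atTop atTop := tendsto_id.const_mul_atTop (by positivity)
  have hε : Tendsto ε atTop (𝓝 0) := by
    simpa using (Real.tendsto_exp_neg_atTop_nhds_zero.comp hσ).const_mul D
  have hε2 : ∀ᶠ s in atTop, ε s ≤ 1 / 2 := hε.eventually_le_const one_half_pos
  have hεg : (fun s ↦ Real.exp (n * s) * ε s) =O[atTop] g :=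
    ((Asymptotics.isBigO_refl g atTop).const_mul_left D).congr_left fun s ↦
      (congrArg (D * ·) (exp_mul_exp_neg_div_add_one (by positivity) s).symm).trans
        (mul_left_comm _ _ _)
  have hφ {δ : ℝ → ℝ} (hδ : Tendsto δ atTop (𝓝 0)) (hδε : δ =O[atTop] ε) :
      (fun s ↦ V * (Real.exp (n * s) * (φ (δ s) - 1))) =O[atTop] g :=
    (((Asymptotics.isBigO_refl _ _).mul
      (((isBigO_exp_mul_one_add_pow_sub_one n r).comp_tendsto hδ).trans hδε)).trans
        hεg).const_mul_left V
  have hbound : (fun s ↦ V * g s * (1 + 2 * -ε s) ^ r) =O[atTop] g := by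
    have hlim : Tendsto (fun s ↦ (1 + 2 * -ε s) ^ r) atTop (𝓝 1) := by
      simpa using ((hε.neg.const_mul 2).const_add 1).pow r
    simpa using ((Asymptotics.isBigO_refl g atTop).const_mul_left V).mul (hlim.isBigO_one ℝ)
  refine isBigO_of_le_of_le
    ((hφ (δ := fun s ↦ -ε s) (by simpa using hε.neg)
      (Asymptotics.isBigO_refl ε atTop).neg_left).sub hbound)
    (((isBigO_exp_of_le_add hN hn hupper).comp_tendsto hσ).add
      (hφ hε (Asymptotics.isBigO_refl ε atTop))) ?_ ?_
  · filter_upwards [hε2] with s hs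
    have h := hlower s (σ s) hs
    rw [mul_sub, sub_eq_add_neg, Real.exp_add, ← mul_neg] at h
    simp only [φ, g]
    linarith
  · filter_upwards [hε2] with s hs
    have h := hupper s (σ s) hs
    rw [mul_add, Real.exp_add] at h
    simp only [φ, Function.comp_apply]
    linarith

end Asymptotics

section IdealClasses

variable {R : Type*} [CommRing R] [IsDedekindDomain R] [Module.Free ℤ R] [Module.Finite ℤ R]

theorem card_absNorm_le_mk0_eq {C : ClassGroup R} {J : (Ideal R)⁰} (hJ : ClassGroup.mk0 J = C⁻¹)
    (x : ℝ) :
    Nat.card {I : (Ideal R)⁰ | (absNorm I.1 : ℝ) ≤ x ∧ ClassGroup.mk0 I = C} =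
      Nat.card {I : (Ideal R)⁰ | J.1 ∣ I.1 ∧ Submodule.IsPrincipal I.1 ∧
        (absNorm I.1 : ℝ) ≤ absNorm J.1 * x} := by
  have hmul (I : (Ideal R)⁰) : ((absNorm I.1 : ℝ) ≤ x ∧ ClassGroup.mk0 I = C) ↔
      Submodule.IsPrincipal (J * I).1 ∧ (absNorm (J * I).1 : ℝ) ≤ absNorm J.1 * x := by
    rw [← ClassGroup.mk0_eq_one_iff (J * I).2, Subtype.coe_eta, map_mul, hJ, inv_mul_eq_one,
      eq_comm (a := C), Submonoid.coe_mul, map_mul, Nat.cast_mul,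
      mul_le_mul_iff_right₀ (absNorm_pos J), and_comm]
  refine Eq.trans (Nat.card_image_of_injective (injective_mul_left_nonZeroDivisors J) _).symm
    (congrArg (fun A : Set (Ideal R)⁰ ↦ Nat.card A) (Set.ext fun I ↦ ?_))
  have hdvd : J.1 ∣ I.1 ↔ I ∈ Set.range (J * ·) := by
    rw [range_mul_left_nonZeroDivisors, Set.mem_ofPred_eq]
  constructor
  · rintro ⟨I, hI, rfl⟩
    exact ⟨hdvd.mpr ⟨I, rfl⟩, (hmul I).mp hI⟩
  · rintro ⟨hJI, hI⟩
    obtain ⟨I, rfl⟩ := hdvd.mp hJI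
    exact ⟨I, (hmul I).mpr hI, rfl⟩

theorem idealCount_eq_sum_classGroup [CharZero R] [Fintype (ClassGroup R)] (x : ℝ) :
    idealCount R x =
      ∑ C, Nat.card {I : (Ideal R)⁰ | (absNorm I.1 : ℝ) ≤ x ∧ ClassGroup.mk0 I = C} := by
  have := (finite_setOf_absNorm_le (R := R) x).to_subtype
  rw [idealCount, ← Nat.card_congr (Equiv.sigmaFiberEquiv fun I ↦ ClassGroup.mk0 I.1),
    Nat.card_sigma]
  exact Finset.sum_congr rfl fun C _ ↦ Nat.card_congr <|
    Equiv.subtypeSubtypeEquivSubtypeInter (fun I : (Ideal R)⁰ ↦ (absNorm I.1 : ℝ) ≤ x)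
      (fun I : (Ideal R)⁰ ↦ ClassGroup.mk0 I = C)

theorem idealCount_le_mul_rpow [CharZero R] {x y θ : ℝ} (hθ : 0 ≤ θ) (hxy : x ≤ y) (hx : 0 ≤ x) :
    idealCount R x ≤ idealCount R y * x ^ θ := by
  obtain hx1 | hx1 := lt_or_ge x 1
  · have hempty : {I : (Ideal R)⁰ | (absNorm I.1 : ℝ) ≤ x} = ∅ :=
      Set.eq_empty_of_forall_notMem fun I hI ↦ (hx1.trans_le (one_le_absNorm I)).not_ge hI
    rw [idealCount, hempty, Nat.card_of_isEmpty, Nat.cast_zero]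
    positivity
  · have hmono : idealCount R x ≤ idealCount R y :=
      Nat.card_mono (finite_setOf_absNorm_le y) fun _ hI ↦ le_trans hI hxy
    exact (Nat.cast_le.mpr hmono).trans
      (le_mul_of_one_le_right (Nat.cast_nonneg _) (Real.one_le_rpow hx1 hθ))

theorem le_mul_rpow_of_le {x y θ : ℝ} (hθ0 : 0 ≤ θ) (hθ1 : θ ≤ 1) (hx : 0 < x) (hxy : x ≤ y)
    (hy : 1 ≤ y) : x ≤ y * x ^ θ :=
  calc x = x ^ (1 - θ) * x ^ θ := by rw [← Real.rpow_add hx, sub_add_cancel, Real.rpow_one]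
    _ ≤ y ^ (1 - θ) * x ^ θ := by gcongr
    _ ≤ y * x ^ θ := by
      gcongr
      exact Real.rpow_le_self_of_one_le hy (by linarith)

theorem exists_abs_idealCount_sub_le [CharZero R] {κ θ : ℝ} (hθ0 : 0 ≤ θ) (hθ1 : θ ≤ 1)
    (h : (fun x ↦ idealCount R x - κ * x) =O[atTop] fun x ↦ x ^ θ) :
    ∃ M, ∀ x, 0 < x → |idealCount R x - κ * x| ≤ M * x ^ θ := by
  obtain ⟨c, hc0, hc⟩ := h.exists_pos
  obtain ⟨y, hy⟩ := eventually_atTop.mp (hc.bound.and (eventually_ge_atTop 1))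
  have hy1 : 1 ≤ y := (hy y le_rfl).2
  have hM : 0 ≤ idealCount R y + |κ| * y := by positivity
  refine ⟨c + (idealCount R y + |κ| * y), fun x hx ↦ ?_⟩
  have hxθ : 0 ≤ x ^ θ := Real.rpow_nonneg hx.le θ
  rw [add_mul]
  obtain hyx | hxy := le_total y x
  · have hbound := (hy x hyx).1
    rw [Real.norm_eq_abs, Real.norm_of_nonneg hxθ] at hbound
    exact hbound.trans (le_add_of_nonneg_right (mul_nonneg hM hxθ))
  · refine le_add_of_nonneg_of_le (mul_nonneg hc0.le hxθ) ?_
    calc |idealCount R x - κ * x| ≤ idealCount R x + |κ| * x := by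
          simpa [abs_mul, abs_of_pos hx] using abs_sub (idealCount R x : ℝ) (κ * x)
      _ ≤ idealCount R y * x ^ θ + |κ| * (y * x ^ θ) := by
          gcongr
          · exact idealCount_le_mul_rpow hθ0 hxy hx.le
          · exact le_mul_rpow_of_le hθ0 hθ1 hx hxy hy1
      _ = (idealCount R y + |κ| * y) * x ^ θ := by ring

end IdealClasses

section ConeCountAsymptotics

open MeasureTheory NumberField NumberField.InfinitePlace NumberField.mixedEmbedding
  NumberField.mixedEmbedding.fundamentalCone
open Module (finrank)

variable {F : Type*} [Field F] [NumberField F]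

open scoped Classical in
theorem exists_isBigO_coneCount_sub {ι : Type*} [Finite ι] (b : Module.Basis ι ℝ (mixedSpace F)) :
    ∃ A : ℝ, (fun s ↦ coneCount b s - A * Real.exp (finrank ℚ F * s)) =O[atTop]
      fun s ↦ Real.exp (finrank ℚ F * (finrank ℚ F / (finrank ℚ F + 1) * s)) := by
  have := Fintype.ofFinite ι
  obtain ⟨D, hD, hbounds⟩ := exists_coneCount_bounds b
  obtain ⟨V, -, hV⟩ := exists_volume_coneBox F
  set c := volume.real (ZSpan.fundamentalDomain b)
  have hc : c ≠ 0 := (measureReal_ne_zero_iff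
    (ZSpan.fundamentalDomain_isBounded b).measure_lt_top.ne).mpr
      (ZSpan.measure_fundamentalDomain_ne_zero b)
  have hn : (0 : ℝ) < finrank ℚ F := mod_cast Module.finrank_pos
  have hasymp := isBigO_sub_mul_exp_of_le_add (N := fun s ↦ coneCount b s * c) (V := V) (D := D)
    (r := Nat.card (InfinitePlace F) - 1) (fun s ↦ by positivity) hn
    (fun s σ hσ ↦ by
      have hσ0 : 0 < D * Real.exp (-σ) := by positivity
      simpa only [(hV (s + D * Real.exp (-σ)) (D * Real.exp (-σ)) (by linarith)).2]
        using (hbounds s σ hσ).1)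
    fun s σ hσ ↦ by
      have hV (s) := (hV s (-(D * Real.exp (-σ))) (by linarith)).2
      simpa only [hV] using (hbounds s σ hσ).2
  refine ⟨V / c, (hasymp.const_mul_left c⁻¹).congr_left fun s ↦ ?_⟩
  field_simp

theorem card_idealSet_norm_le (J : (Ideal (𝓞 F))⁰) {x : ℝ} (hx : 0 < x) :
    Nat.card {a : idealSet F J // mixedEmbedding.norm (a : mixedSpace F) ≤ x} =
      coneCount (fractionalIdealLatticeBasis F (FractionalIdeal.mk0 F J))
        (Real.log x / finrank ℚ F) := by
  have hn : (finrank ℚ F : ℝ) ≠ 0 := mod_cast Module.finrank_pos.ne'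
  rw [coneCount, ← Nat.card_coe_set_eq]
  refine Nat.card_congr ((Equiv.subtypeSubtypeEquivSubtypeInter (· ∈ idealSet F J)
    fun z ↦ mixedEmbedding.norm z ≤ x).trans
    (Equiv.subtypeEquivRight fun z ↦ ?_))
  rw [Set.mem_inter_iff, mem_coneBox_zero, mul_div_cancel₀ _ hn, Real.exp_log hx, SetLike.mem_coe,
    mem_span_fractionalIdealLatticeBasis]
  exact and_right_comm.trans (and_congr_right fun _ ↦ mem_idealLattice F _)

theorem exists_isBigO_card_idealSet_sub (J : (Ideal (𝓞 F))⁰) :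
    ∃ A : ℝ, (fun x ↦
      Nat.card {a : idealSet F J // mixedEmbedding.norm (a : mixedSpace F) ≤ x} - A * x) =O[atTop]
        fun x : ℝ ↦ x ^ (finrank ℚ F / (finrank ℚ F + 1) : ℝ) := by
  have hn : (0 : ℝ) < finrank ℚ F := mod_cast Module.finrank_pos
  obtain ⟨A, hA⟩ := exists_isBigO_coneCount_sub
    (fractionalIdealLatticeBasis F (FractionalIdeal.mk0 F J))
  refine ⟨A, (hA.comp_tendsto (Real.tendsto_log_atTop.atTop_div_const hn)).congr' ?_ ?_⟩
  · filter_upwards [eventually_gt_atTop 0] with x hx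
    rw [Function.comp_apply, card_idealSet_norm_le J hx, mul_div_cancel₀ _ hn.ne', Real.exp_log hx]
  · filter_upwards [eventually_gt_atTop 0] with x hx
    rw [Function.comp_apply, Real.rpow_def_of_pos hx]
    congr 1
    field_simp

theorem exists_isBigO_card_mk0_eq_sub (C : ClassGroup (𝓞 F)) :
    ∃ A : ℝ, (fun x ↦
      Nat.card {I : (Ideal (𝓞 F))⁰ | (absNorm I.1 : ℝ) ≤ x ∧ ClassGroup.mk0 I = C} - A * x)
        =O[atTop] fun x : ℝ ↦ x ^ (finrank ℚ F / (finrank ℚ F + 1) : ℝ) := by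
  obtain ⟨J, hJ⟩ := ClassGroup.mk0_surjective C⁻¹
  obtain ⟨A, hA⟩ := exists_isBigO_card_idealSet_sub J
  have hN := absNorm_pos J
  have ht : (Units.torsionOrder F : ℝ) ≠ 0 := mod_cast Units.torsionOrder_ne_zero F
  have hcard (x : ℝ) : (Nat.card {a : idealSet F J //
      mixedEmbedding.norm (a : mixedSpace F) ≤ absNorm J.1 * x} : ℝ) =
        Nat.card {I : (Ideal (𝓞 F))⁰ | (absNorm I.1 : ℝ) ≤ x ∧ ClassGroup.mk0 I = C} *
          Units.torsionOrder F := by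
    rw [card_absNorm_le_mk0_eq hJ, ← card_isPrincipal_dvd_norm_le, Nat.cast_mul, Set.coe_ofPred]
  have hcomp := (hA.comp_tendsto (tendsto_id.const_mul_atTop hN)).const_mul_left
    (Units.torsionOrder F : ℝ)⁻¹
  refine ⟨A * absNorm J.1 / Units.torsionOrder F, (hcomp.congr_left fun x ↦ ?_).trans ?_⟩
  · rw [Function.comp_apply, id, hcard]
    field_simp
  · refine .of_bound ((absNorm J.1 : ℝ) ^ (finrank ℚ F / (finrank ℚ F + 1) : ℝ)) ?_
    filter_upwards [eventually_ge_atTop 0] with x hx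
    rw [Function.comp_apply, id, Real.mul_rpow hN.le hx, norm_mul,
      Real.norm_of_nonneg (Real.rpow_nonneg hN.le _)]

theorem eq_of_isBigO_sub_mul {f : ℝ → ℝ} {A κ θ : ℝ} (hθ : θ < 1)
    (hf : (fun x ↦ f x - A * x) =O[atTop] fun x ↦ x ^ θ)
    (hlim : Tendsto (fun x ↦ f x / x) atTop (𝓝 κ)) : A = κ := by
  have hsub : Tendsto (fun x ↦ f x / x - A) atTop (𝓝 0) := by
    refine ((hf.mul (Asymptotics.isBigO_refl (fun x ↦ x⁻¹) atTop)).congr' ?_ ?_).trans_tendsto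
      (tendsto_rpow_neg_atTop (sub_pos.mpr hθ))
    · filter_upwards [eventually_ne_atTop 0] with x hx
      rw [sub_mul, mul_inv_cancel_right₀ hx, div_eq_mul_inv]
    · filter_upwards [eventually_gt_atTop 0] with x hx
      rw [neg_sub, Real.rpow_sub_one hx.ne', div_eq_mul_inv]
  exact tendsto_nhds_unique (tendsto_sub_nhds_zero_iff.mp hsub) hlim

variable (F) in
theorem isBigO_idealCount_sub :
    (fun x ↦ idealCount (𝓞 F) x - dedekindZeta_residue F * x) =O[atTop]
      fun x : ℝ ↦ x ^ (finrank ℚ F / (finrank ℚ F + 1) : ℝ) := by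
  choose A hA using exists_isBigO_card_mk0_eq_sub (F := F)
  have hsum : (fun x ↦ idealCount (𝓞 F) x - (∑ C, A C) * x) =O[atTop]
      fun x : ℝ ↦ x ^ (finrank ℚ F / (finrank ℚ F + 1) : ℝ) := by
    refine (Asymptotics.IsBigO.sum (s := Finset.univ) fun C _ ↦ hA C).congr_left fun x ↦ ?_
    rw [Finset.sum_apply, Finset.sum_sub_distrib, ← Finset.sum_mul, idealCount_eq_sum_classGroup,
      Nat.cast_sum]
  have hθ : (finrank ℚ F / (finrank ℚ F + 1) : ℝ) < 1 :=
    (div_lt_one (by positivity)).mpr (lt_add_one _)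
  rwa [eq_of_isBigO_sub_mul hθ hsum (Ideal.tendsto_norm_le_div_atTop₀ F)] at hsum

end ConeCountAsymptotics

open NumberField in
theorem exists_abs_idealCount_sub_le_rpow (F : Type*) [Field F] [NumberField F] :
    ∃ θ : ℝ, 1 / 2 < θ ∧ θ < 1 ∧
      ∃ M, ∀ x, 0 < x → |idealCount (𝓞 F) x - dedekindZeta_residue F * x| ≤ M * x ^ θ := by
  have hn : (Module.finrank ℚ F / (Module.finrank ℚ F + 1) : ℝ) < 1 :=
    (div_lt_one (by positivity)).mpr (lt_add_one _)
  have hθ1 : max (Module.finrank ℚ F / (Module.finrank ℚ F + 1) : ℝ) (2 / 3) < 1 :=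
    max_lt hn (by norm_num)
  refine ⟨_, lt_max_of_lt_right (by norm_num), hθ1,
    exists_abs_idealCount_sub_le (le_max_of_le_right (by norm_num)) hθ1.le ?_⟩
  refine (isBigO_idealCount_sub F).trans (.of_bound 1 ?_)
  filter_upwards [eventually_ge_atTop 1] with x hx
  rw [one_mul, Real.norm_of_nonneg (by positivity), Real.norm_of_nonneg (by positivity)]
  exact Real.rpow_le_rpow_of_exponent_le hx (le_max_left _ _)

section Specialization

open NumberField

theorem kappa_eq_dedekindZeta_residue : kappa K = dedekindZeta_residue K := by
  rw [kappa, dedekindZeta_residue_def, mul_right_comm]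

theorem zetaKR_eq_tsum_nonZeroDivisors (s : ℝ) :
    zetaKR K s = ∑' I : (Ideal (𝓞 K))⁰, (absNorm I.1 : ℝ) ^ (-s) :=
  ((Equiv.subtypeEquivRight fun _ ↦ mem_nonZeroDivisors_iff_ne_zero).tsum_eq
    fun I : {I : Ideal (𝓞 K) // I ≠ 0} ↦ (absNorm I.1 : ℝ) ^ (-s)).symm

omit [NumberField K] in
theorem isHFree_iff_isPowFree {h : ℕ} (hh : h ≠ 0) (I : (Ideal (𝓞 K))⁰) :
    IsHFree K h I.1 ↔ IsPowFree (fun _ ↦ h) I.1 := by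
  have hI : I.1 ≠ 0 := nonZeroDivisors.ne_zero I.2
  refine ⟨fun hfree p ↦ hfree.2 _ p.isPrime, fun hfree ↦ ⟨hI, fun p hp hdvd ↦ ?_⟩⟩
  have hp0 : p ≠ ⊥ := by
    rintro rfl
    exact hI (zero_dvd_iff.mp ((zero_pow hh : (⊥ : Ideal (𝓞 K)) ^ h = 0) ▸ hdvd))
  exact hfree ⟨p, hp, hp0⟩ hdvd

theorem card_isHFree_forall_dvd {h : ℕ} (hh : h ≠ 0) {u : ℕ}
    (P : Fin u ↪ HeightOneSpectrum (𝓞 K)) (x : ℝ) :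
    Nat.card {m : Ideal (𝓞 K) //
        IsHFree K h m ∧ (absNorm m : ℝ) ≤ x ∧ ∀ i, (P i).asIdeal ∣ m} =
      Nat.card {I : (Ideal (𝓞 K))⁰ | IsPowFree (fun _ ↦ h) I.1 ∧
        (∀ p ∈ Finset.univ.map P, p.asIdeal ∣ I.1) ∧ (absNorm I.1 : ℝ) ≤ x} := by
  refine Eq.trans (congrArg (fun A : Set (Ideal (𝓞 K)) ↦ Nat.card A) (Set.ext fun m ↦ ?_))
    (Nat.card_image_of_injective Subtype.val_injective _)
  constructor
  · rintro ⟨hfree, hx, hdvd⟩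
    exact ⟨⟨m, mem_nonZeroDivisors_of_ne_zero hfree.1⟩,
      ⟨(isHFree_iff_isPowFree K hh _).mp hfree, by simpa using hdvd, hx⟩, rfl⟩
  · rintro ⟨I, ⟨hfree, hdvd, hx⟩, rfl⟩
    exact ⟨(isHFree_iff_isPowFree K hh I).mpr hfree, hx, by simpa using hdvd⟩

end Specialization

/-- **Counting `h`-free ideals divisible by given distinct primes `p_1, …, p_u`**:
there is `τ = τ(h,K) < 1` such that the count equals
`(∏_i (N(p_i)^{h-1} - 1)/(N(p_i)^h - 1)) (κ/ζ_K(h)) x + O_{h,u}(x^τ/∏_i N(p_i)^τ)`. -/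
theorem count_hFree_ideals_divisible (h : ℕ) (hh : 2 ≤ h) :
    ∃ τ : ℝ, τ < 1 ∧ ∀ u : ℕ, ∃ C : ℝ,
      ∀ p : Fin u → Ideal (NumberField.RingOfIntegers K),
        Function.Injective p → (∀ i, (p i).IsPrime) → (∀ i, p i ≠ ⊥) →
        ∀ x : ℝ, 2 ≤ x →
        |(Nat.card {m : Ideal (NumberField.RingOfIntegers K) //
            IsHFree K h m ∧ (Ideal.absNorm m : ℝ) ≤ x ∧ ∀ i, p i ∣ m} : ℝ) -
          (∏ i : Fin u, ((Ideal.absNorm (p i) : ℝ) ^ (h - 1) - 1) /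
              ((Ideal.absNorm (p i) : ℝ) ^ h - 1)) * (kappa K / zetaKR K h) * x| ≤
        C * x ^ τ / ∏ i : Fin u, (Ideal.absNorm (p i) : ℝ) ^ τ := by
  obtain ⟨θ, hθ, hθ1, M, hM⟩ := exists_abs_idealCount_sub_le_rpow K
  have hhθ : 1 < h * θ := by nlinarith [(Nat.ofNat_le_cast (α := ℝ)).mpr hh]
  refine ⟨θ, hθ1, fun u ↦ ⟨M * (∏' q : HeightOneSpectrum (NumberField.RingOfIntegers K),
    (1 + (absNorm q.asIdeal : ℝ) ^ (-(h * θ)))) * 2 ^ u, fun p hp hprime hne x hx ↦ ?_⟩⟩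
  let P : Fin u ↪ HeightOneSpectrum (NumberField.RingOfIntegers K) :=
    ⟨fun i ↦ ⟨p i, hprime i, hne i⟩, fun i j hij ↦ hp (congrArg HeightOneSpectrum.asIdeal hij)⟩
  have hcount := abs_card_isPowFree_forall_dvd_sub_le hθ1.le hM hh hhθ (Finset.univ.map P)
    (x := x) (by linarith)
  rw [← card_isHFree_forall_dvd K (by lia) P, ← zetaKR_eq_tsum_nonZeroDivisors,
    ← kappa_eq_dedekindZeta_residue, Finset.card_map, Finset.card_fin, Finset.prod_map,
    Finset.prod_map] at hcount
  exact hcount.trans_eq (mul_div_assoc _ _ _).symm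

end
end
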